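/- Let α ≤ β ≤ −1 be negative integers, let M = (M_i)_{i≥0} be real parameters with M_i ∉ {0,1}, and let F be a finite set of positive integers with {−β, …, −α−β−1} ⊆ F. Assume Ω_{M,F}^{α,β}(x) ≠ 0 for all x ∈ [−1,1]. Then the weight ω_{α,β;M,F}(x) = (1−x)^{α+n_F}(1+x)^{β+n_F} / (Ω_{M,F}^{α,β}(x))² is a positive integrable weight on [−1,1], the exceptional Jacobi polynomials P_n^{α,β;M,F}, n ∈ σ_F, are mutually orthogonal in L²([−1,1], ω_{α,β;M,F}), and their linear span is dense in L²([−1,1], ω_{α,β;M,F}) (i.e., they form a complete orthogonal system). -/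

import Mathlib

open Finset MeasureTheory

noncomputable section ExceptionalHahnJacobi

/-- Pochhammer symbol `(z)_m = z (z+1) ⋯ (z+m-1)`. -/
def poch (z : ℝ) (m : ℕ) : ℝ := ∏ i ∈ Finset.range m, (z + (i : ℝ))

/-- Pochhammer symbol with integer exponent; `(z)_{-k} = 1 / ((z-1)(z-2)⋯(z-k))`. -/
def pochZ (z : ℝ) (m : ℤ) : ℝ :=
  if 0 ≤ m then poch z m.toNat else 1 / poch (z - ((-m).toNat : ℝ)) (-m).toNat

/-- Generalized binomial coefficient `C(z, k) = z(z-1)⋯(z-k+1)/k!`. -/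
def genBinom (z : ℝ) (k : ℕ) : ℝ := (∏ i ∈ Finset.range k, (z - (i : ℝ))) / (k.factorial : ℝ)

/-- `λ^{a,b}(x) = x (x + a + b + 1)`. -/
def lam (a b x : ℝ) : ℝ := x * (x + a + b + 1)

/-- Hahn polynomial `h_n^{a,b,N}(x)`. -/
def hahn (a b N : ℝ) (n : ℕ) (x : ℝ) : ℝ :=
  ∑ j ∈ Finset.range (n + 1),
    poch (-(n : ℝ)) j * poch (a + b + (n : ℝ) + 1) j * poch (-N + (j : ℝ)) (n - j) *
      poch (a + (j : ℝ) + 1) (n - j) * poch (-x) j / (j.factorial : ℝ)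

/-- Dual Hahn polynomial `R_n^{a,b,N}(x)`. -/
def dualHahn (a b N : ℝ) (n : ℕ) (x : ℝ) : ℝ :=
  ∑ j ∈ Finset.range (n + 1),
    poch (-(n : ℝ)) j * poch (-N + (j : ℝ)) (n - j) * poch (a + (j : ℝ) + 1) (n - j) /
        ((n.factorial : ℝ) * (-1 : ℝ) ^ j * (j.factorial : ℝ)) *
      ∏ i ∈ Finset.range j, (x - (i : ℝ) * (a + b + 1 + (i : ℝ)))

/-- Dual Hahn polynomial with integer degree; zero for negative degree. -/
def dualHahnZ (a b N : ℝ) (m : ℤ) (x : ℝ) : ℝ :=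
  if 0 ≤ m then dualHahn a b N m.toNat x else 0

/-- Jacobi polynomial `P_n^{a,b}(x)`. -/
def jacobiP (a b : ℝ) (n : ℕ) (x : ℝ) : ℝ :=
  (2 : ℝ)⁻¹ ^ n * ∑ j ∈ Finset.range (n + 1),
    genBinom ((n : ℝ) + a) j * genBinom ((n : ℝ) + b) (n - j) * (x - 1) ^ (n - j) * (x + 1) ^ j

/-- The function `φ_u^{α,β,N}(s,x)`, a normalized terminating ₃F₂. -/
def phiH (α β : ℤ) (N : ℝ) (u : ℕ) (s x : ℝ) : ℝ :=
  poch ((α : ℝ) + 1) (max u (-α - β - (u : ℤ) - 1).toNat) *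
    poch (-N) (max u (-α - β - (u : ℤ) - 1).toNat) *
    ∑ j ∈ Finset.range (u + 1),
      poch (-(u : ℝ)) j * poch ((u : ℝ) - s + (α : ℝ) + (β : ℝ) + 1) j * poch (-x) j /
        (poch ((α : ℝ) - s + 1) j * poch (-N) j * (j.factorial : ℝ))

/-- The polynomials `Ĥ_n^{α,β,N;M}(x)`. -/
def Hhat (α β : ℤ) (N : ℝ) (M : ℕ → ℝ) (n : ℕ) (x : ℝ) : ℝ :=
  if ⌈((-α - β : ℤ) : ℚ) / 2⌉ ≤ (n : ℤ) ∧ (n : ℤ) ≤ -α - 1 then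
    deriv (fun s => phiH α β N n s x) 0 -
      deriv (fun s => phiH α β N (-α - β - (n : ℤ) - 1).toNat s x) 0
  else if -α ≤ (n : ℤ) ∧ (n : ℤ) ≤ -α - β - 1 then
    (-1 : ℝ) ^ ((β : ℤ) + (n : ℤ)) * ((β + (n : ℤ)).toNat.factorial : ℝ) *
      (((-α - β - (n : ℤ) - 1).toNat.factorial : ℝ) * poch (-x) (-α).toNat *
          hahn (-(α : ℝ)) (β : ℝ) ((α : ℝ) + N) ((α + (n : ℤ)).toNat) (x + (α : ℝ)) +
        (((α + (n : ℤ)).toNat.factorial : ℝ)) *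
            poch (-N - (α : ℝ) - (β : ℝ) - (n : ℝ) - 1) (2 * (n : ℤ) + α + β + 1).toNat /
            (M ((α + (n : ℤ)).toNat) - 1) *
          hahn (α : ℝ) (β : ℝ) N ((-α - β - (n : ℤ) - 1).toNat) x)
  else hahn (α : ℝ) (β : ℝ) N n x

/-- The function `φ_u^{α,β}(s,x)`, a normalized terminating ₂F₁. -/
def phiJ (α β : ℤ) (u : ℕ) (s x : ℝ) : ℝ :=
  poch ((α : ℝ) + 1) (max u (-α - β - (u : ℤ) - 1).toNat) /
      ((max u.factorial (-α - β - (u : ℤ) - 1).toNat.factorial : ℕ) : ℝ) *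
    ∑ j ∈ Finset.range (u + 1),
      poch (-(u : ℝ)) j * poch ((u : ℝ) - s + (α : ℝ) + (β : ℝ) + 1) j /
          (poch ((α : ℝ) - s + 1) j * (j.factorial : ℝ)) * ((1 - x) / 2) ^ j

/-- The polynomials `P̂_n^{α,β;M}(x)`. -/
def Phat (α β : ℤ) (M : ℕ → ℝ) (n : ℕ) (x : ℝ) : ℝ :=
  if ⌈((-α - β : ℤ) : ℚ) / 2⌉ ≤ (n : ℤ) ∧ (n : ℤ) ≤ -α - 1 then
    deriv (fun s => phiJ α β n s x) 0 -
      deriv (fun s => phiJ α β (-α - β - (n : ℤ) - 1).toNat s x) 0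
  else if -α ≤ (n : ℤ) ∧ (n : ℤ) ≤ -α - β - 1 then
    (-1 : ℝ) ^ ((β : ℤ) + (n : ℤ)) *
      ((((n : ℤ) + α).toNat.factorial : ℝ) * (((n : ℤ) + β).toNat.factorial : ℝ) *
        ((-α - β - (n : ℤ) - 1).toNat.factorial : ℝ)) / (n.factorial : ℝ) *
      ((M ((α + (n : ℤ)).toNat) - 1)⁻¹ * jacobiP (α : ℝ) (β : ℝ) ((-α - β - (n : ℤ) - 1).toNat) x +
        ((1 - x) / 2) ^ (-α).toNat * jacobiP (-(α : ℝ)) (β : ℝ) ((α + (n : ℤ)).toNat) x)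
  else jacobiP (α : ℝ) (β : ℝ) n x

/-- `u_F = Σ_{f ∈ F} f - C(n_F + 1, 2)`. -/
def uF (F : Finset ℕ) : ℕ := (∑ f ∈ F, f) - (F.card + 1).choose 2

/-- `n ∈ σ_F = {u_F, u_F + 1, …} \ {u_F + f : f ∈ F}`. -/
def inSigma (F : Finset ℕ) (n : ℕ) : Prop := uF F ≤ n ∧ n - uF F ∉ F

/-- The `i`-th element of `F` in increasing order. -/
def elemOf (F : Finset ℕ) (i : Fin F.card) : ℕ := ((F.orderIsoOfFin rfl i : {x // x ∈ F}) : ℕ)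

/-- The `i`-th element of a finite set of integers, in increasing order. -/
def elemOfZ (S : Finset ℤ) (i : Fin S.card) : ℤ := ((S.orderIsoOfFin rfl i : {x // x ∈ S}) : ℤ)

/-- Exceptional Hahn polynomial `h_n^{α,β,N;M,F}(x)`. -/
def exHahn (α β : ℤ) (N : ℝ) (M : ℕ → ℝ) (F : Finset ℕ) (n : ℕ) (x : ℝ) : ℝ :=
  Matrix.det (Matrix.of fun i j : Fin (F.card + 1) =>
    Fin.cases (Hhat α β N M (n - uF F) (x + ((j : ℕ) : ℝ)))
      (fun k => Hhat α β N M (elemOf F k) (x + ((j : ℕ) : ℝ))) i)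

/-- The polynomial `Ω_{M,F}^{α,β,N}(x)`. -/
def OmegaH (α β : ℤ) (N : ℝ) (M : ℕ → ℝ) (F : Finset ℕ) (x : ℝ) : ℝ :=
  Matrix.det (Matrix.of fun i j : Fin F.card =>
    Hhat α β N M (elemOf F i) (x + ((j : ℕ) : ℝ)))

/-- The polynomial `Λ_{M,F}^{α,β,N}(x)` (columns `j ∈ {1,…,n_F+1}`, `j ≠ n_F`). -/
def LambdaH (α β : ℤ) (N : ℝ) (M : ℕ → ℝ) (F : Finset ℕ) (x : ℝ) : ℝ :=
  Matrix.det (Matrix.of fun i j : Fin F.card =>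
    Hhat α β N M (elemOf F i)
      (x + ((if (j : ℕ) = F.card - 1 then F.card else (j : ℕ) : ℕ) : ℝ)))

/-- Exceptional Jacobi polynomial `P_n^{α,β;M,F}(x)`. -/
def exJacobi (α β : ℤ) (M : ℕ → ℝ) (F : Finset ℕ) (n : ℕ) (x : ℝ) : ℝ :=
  Matrix.det (Matrix.of fun i j : Fin (F.card + 1) =>
    Fin.cases (iteratedDeriv (j : ℕ) (Phat α β M (n - uF F)) x)
      (fun k => iteratedDeriv (j : ℕ) (Phat α β M (elemOf F k)) x) i)

/-- The polynomial `Ω_{M,F}^{α,β}(x)`. -/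
def OmegaJ (α β : ℤ) (M : ℕ → ℝ) (F : Finset ℕ) (x : ℝ) : ℝ :=
  Matrix.det (Matrix.of fun i j : Fin F.card =>
    iteratedDeriv (j : ℕ) (Phat α β M (elemOf F i)) x)

/-- `F_ext = F \ {-β, …, -α-β-1}`. -/
def Fext (α β : ℤ) (F : Finset ℕ) : Finset ℕ :=
  F.filter fun f : ℕ => ((f : ℤ) < -β ∨ -α - β ≤ (f : ℤ))

/-- Admissibility of the data `α, β, M, F`. -/
def IsAdmissible (α β : ℤ) (M : ℕ → ℝ) (F : Finset ℕ) : Prop :=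
  (∀ i : ℕ, (i : ℤ) ≤ -β - 1 → (∀ f ∈ F, (i : ℤ) ≠ -β - (f : ℤ) - 1) →
      Real.sign (M i) =
        Real.sign (∏ f ∈ Fext α β F, (((i : ℝ) - (f : ℝ) - (α : ℝ)) * ((i : ℝ) + (f : ℝ) + (β : ℝ) + 1)))) ∧
  (∀ x : ℤ, 0 ≤ x → (∃ f ∈ F, x ≤ (f : ℤ) + α + β) →
      0 ≤ ∏ f ∈ F.filter (fun f : ℕ => -α - β ≤ (f : ℤ)), (x - (f : ℤ) - α - β))

/-- `U_{F-} = {f + α + β : f ∈ F, 1 ≤ f ≤ -β-1}`. -/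
def UFm (α β : ℤ) (F : Finset ℕ) : Finset ℤ :=
  (F.filter fun f : ℕ => (1 ≤ f ∧ (f : ℤ) ≤ -β - 1)).image fun f : ℕ => (f : ℤ) + α + β

/-- `U_{F+} = {f + α + β : f ∈ F, f ≥ -α-β}`. -/
def UFp (α β : ℤ) (F : Finset ℕ) : Finset ℤ :=
  (F.filter fun f : ℕ => -α - β ≤ (f : ℤ)).image fun f : ℕ => (f : ℤ) + α + β

/-- `U_F = U_{F-} ∪ U_{F+}`. -/
def UF (α β : ℤ) (F : Finset ℕ) : Finset ℤ := UFm α β F ∪ UFp α β F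

/-- The weight of the measure `ω_{α,β,N}^{M,F}` at the point `x`. -/
def wH (α β : ℤ) (N : ℕ) (M : ℕ → ℝ) (F : Finset ℕ) (x : ℕ) : ℝ :=
  genBinom ((α : ℝ) + (F.card : ℝ) + (x : ℝ)) x *
      genBinom ((β : ℝ) + (N : ℝ) - (x : ℝ)) (N - F.card - x) /
    (OmegaH α β (N : ℝ) M F (x : ℝ) * OmegaH α β (N : ℝ) M F ((x : ℝ) + 1))

/-- The weight `ω_{α,β;M,F}(x)` on `[-1,1]`. -/
def wJ (α β : ℤ) (M : ℕ → ℝ) (F : Finset ℕ) (x : ℝ) : ℝ :=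
  (1 - x) ^ (α + (F.card : ℤ)) * (1 + x) ^ (β + (F.card : ℤ)) / (OmegaJ α β M F x) ^ 2

/-- The measure on `[-1,1]` with density `ω_{α,β;M,F}`. -/
def jacobiMeasure (α β : ℤ) (M : ℕ → ℝ) (F : Finset ℕ) : Measure ℝ :=
  (volume.restrict (Set.Icc (-1 : ℝ) 1)).withDensity fun x => ENNReal.ofReal (wJ α β M F x)

/-- Mass of the dual Hahn measure `ρ_{b,a,N̂}` at `λ^{a,b}(x)`. -/
def rhoMass (a b Nh : ℤ) (x : ℕ) : ℝ :=
  (2 * (x : ℝ) + (a : ℝ) + (b : ℝ) + 1) * poch ((b : ℝ) + 1) x * poch (-(Nh : ℝ)) x *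
      (Nh.toNat.factorial : ℝ) /
    ((-1 : ℝ) ^ x * poch ((x : ℝ) + (a : ℝ) + (b : ℝ) + 1) (Nh + 1).toNat *
      poch ((a : ℝ) + 1) x * (x.factorial : ℝ))

/-- Mass of the measure `ν_{a,b,N̂}^{M}` at `λ^{a,b}(s)`. -/
def nuMass (a b Nh : ℤ) (M : ℕ → ℝ) (s : ℤ) : ℝ :=
  if -b ≤ s ∧ s ≤ -1 then
    (2 * (s : ℝ) + (a : ℝ) + (b : ℝ) + 1) * poch ((Nh : ℝ) + 1 - (s : ℝ)) (s + b).toNat /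
        poch ((Nh : ℝ) + (b : ℝ) + 1) (s + a + 1).toNat * M ((s + b).toNat)
  else if 0 ≤ s ∧ s ≤ Nh then
    poch ((Nh : ℝ) + 1) b.toNat ^ 2 / poch ((b : ℝ) + 1) (a - b).toNat * rhoMass a b Nh s.toNat /
      ∏ i ∈ Finset.range b.toNat, (((s : ℝ) + (a : ℝ) + (i : ℝ) + 1) * ((s : ℝ) + (b : ℝ) - (i : ℝ)))
  else 0

/-- `ζ_v` (defined for any integer `v` via `pochZ`). -/
def zetaH (α β : ℤ) (N : ℝ) (v : ℤ) : ℝ :=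
  pochZ (-N - (α : ℝ) - (β : ℝ)) v * poch ((v : ℝ) + 1) (-α).toNat *
    ((v - α - β).toNat.factorial : ℝ)

/-- `θ_v^M`. -/
def thetaM (β : ℤ) (M : ℕ → ℝ) (v : ℕ) : ℝ :=
  if (v : ℤ) ≤ -β - 1 then 1 - M ((-β - 1 - (v : ℤ)).toNat) else 1

/-- `τ_v = ∏_{u ∈ U_F} (λ^{a,b}(v+α+β) - λ^{a,b}(u))` with `a = -α`, `b = -β`. -/
def tauH (α β : ℤ) (F : Finset ℕ) (v : ℕ) : ℝ :=
  ∏ u ∈ UF α β F,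
    (lam ((-α : ℤ) : ℝ) ((-β : ℤ) : ℝ) ((v : ℝ) + (α : ℝ) + (β : ℝ)) -
      lam ((-α : ℤ) : ℝ) ((-β : ℤ) : ℝ) ((u : ℤ) : ℝ))

/-- `ξ_n`. -/
def xiH (α β : ℤ) (N : ℝ) (F : Finset ℕ) (n : ℕ) : ℝ :=
  pochZ (N - (n : ℝ) + 1) ((n : ℤ) + α + β) ^ (α + (F.card : ℤ) + 1) *
    ∏ j ∈ Finset.range (F.card + 1), poch (N - (n : ℝ) - (j : ℝ) + 1) j

/-- `κ_M`. -/
def kappaM (α β : ℤ) (N : ℝ) (M : ℕ → ℝ) (F : Finset ℕ) : ℝ :=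
  (∏ u ∈ UFm α β F, (1 - M ((-u + α - 1).toNat))) * ∏ u ∈ UF α β F, zetaH α β N u

/-- Entry `(i,j)` (0-based) of the determinant defining `q_n^{a,b,N̂;M,U_F}`. -/
def qEntry (α β : ℤ) (N : ℝ) (M : ℕ → ℝ) (F : Finset ℕ) (n : ℕ) (x : ℝ) (i j : ℕ) : ℝ :=
  if i = 0 then
    (-1 : ℝ) ^ j * dualHahnZ (((-α).toNat : ℝ)) (((-β).toNat : ℝ)) (N + (α : ℝ) + (β : ℝ))
      ((n : ℤ) - (-α).toNat + j) x
  else if h1 : i - 1 < (UFm α β F).card then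
    (-1 : ℝ) ^ j * dualHahnZ (((-α).toNat : ℝ)) (((-β).toNat : ℝ)) (N + (α : ℝ) + (β : ℝ))
      ((n : ℤ) - (-α).toNat + j)
      (lam (((-α).toNat : ℝ)) (((-β).toNat : ℝ)) ((elemOfZ (UFm α β F) ⟨i - 1, h1⟩ : ℤ) : ℝ))
  else if i - 1 - (UFm α β F).card < (-α).toNat then
    poch (((-α).toNat : ℝ) + ((-β).toNat : ℝ) + (N + (α : ℝ) + (β : ℝ)) - (n : ℝ) - (j : ℝ) + 1) j *
      Hhat α β (-2 - (N + (α : ℝ) + (β : ℝ))) M ((-β).toNat + (i - 1 - (UFm α β F).card))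
        (-(n : ℝ) + ((-α).toNat : ℝ) - (j : ℝ) - 1)
  else if h3 : i - 1 - (UFm α β F).card - (-α).toNat < (UFp α β F).card then
    (-1 : ℝ) ^ j * dualHahnZ (((-α).toNat : ℝ)) (((-β).toNat : ℝ)) (N + (α : ℝ) + (β : ℝ))
      ((n : ℤ) - (-α).toNat + j)
      (lam (((-α).toNat : ℝ)) (((-β).toNat : ℝ))
        ((elemOfZ (UFp α β F) ⟨i - 1 - (UFm α β F).card - (-α).toNat, h3⟩ : ℤ) : ℝ))
  else 0

/-- The Krall dual Hahn orthogonal polynomial `q_n^{a,b,N̂;M,U_F}(x)`. -/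
def qKrall (α β : ℤ) (N : ℝ) (M : ℕ → ℝ) (F : Finset ℕ) (n : ℕ) (x : ℝ) : ℝ :=
  Matrix.det (Matrix.of fun i j : Fin (1 + (UFm α β F).card + (-α).toNat + (UFp α β F).card) =>
      qEntry α β N M F n x (i : ℕ) (j : ℕ)) /
    ((-1 : ℝ) ^ ((n + (-α).toNat + (-β).toNat) * ((UF α β F).card + 1) +
        ((-α).toNat + (-β).toNat).choose 2 + ((-β).toNat).choose 2 + (-α).toNat) *
      ∏ u ∈ UF α β F, (x - lam (((-α).toNat : ℝ)) (((-β).toNat : ℝ)) ((u : ℤ) : ℝ)))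

/-- Row used in the renormalized determinant `P̄`: for `-α ≤ g ≤ -α-β-1` it is
`(M_{α+g} - 1) · P̂_g` written without the division by `M_{α+g} - 1`. -/
def PhatBarRow (α β : ℤ) (M : ℕ → ℝ) (g : ℕ) (x : ℝ) : ℝ :=
  if -α ≤ (g : ℤ) ∧ (g : ℤ) ≤ -α - β - 1 then
    (-1 : ℝ) ^ ((β : ℤ) + (g : ℤ)) *
      ((((g : ℤ) + α).toNat.factorial : ℝ) * (((g : ℤ) + β).toNat.factorial : ℝ) *
        ((-α - β - (g : ℤ) - 1).toNat.factorial : ℝ)) / (g.factorial : ℝ) *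
      (jacobiP (α : ℝ) (β : ℝ) ((-α - β - (g : ℤ) - 1).toNat) x +
        (M ((α + (g : ℤ)).toNat) - 1) * ((1 - x) / 2) ^ (-α).toNat *
          jacobiP (-(α : ℝ)) (β : ℝ) ((α + (g : ℤ)).toNat) x)
  else Phat α β M g x

/-- The renormalized exceptional Jacobi polynomial
`P̄_n^{α,β;M,F} = (∏_{i=0}^{-β-1} (M_i - 1)) · P_n^{α,β;M,F}`
(written so that the factors `M_i - 1` are distributed into the corresponding rows of the
determinant; this agrees with the product formula whenever all `M_i ≠ 1`). -/
def Pbar (α β : ℤ) (M : ℕ → ℝ) (F : Finset ℕ) (n : ℕ) (x : ℝ) : ℝ :=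
  (∏ i ∈ (Finset.range (-β).toNat).filter
      (fun i : ℕ => (((i : ℤ) - α).toNat ∉ F ∧ ((i : ℤ) - α).toNat ≠ n - uF F)), (M i - 1)) *
    Matrix.det (Matrix.of fun r j : Fin (F.card + 1) =>
      Fin.cases (iteratedDeriv (j : ℕ) (PhatBarRow α β M (n - uF F)) x)
        (fun k => iteratedDeriv (j : ℕ) (PhatBarRow α β M (elemOf F k)) x) r)

end ExceptionalHahnJacobi

section ExcProof
open Polynomial

/-- The Jacobi operator. -/
noncomputable def jD (a b : ℝ) : ℝ[X] →ₗ[ℝ] ℝ[X] where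
  toFun y := (1 - X ^ 2) * derivative (derivative y) + (C (b - a) - C (a + b + 2) * X) * derivative y
  map_add' y z := by simp only [derivative_add]; ring
  map_smul' c y := by
    simp only [derivative_smul, RingHom.id_apply]
    simp only [smul_eq_C_mul]; ring

lemma jD_apply (a b : ℝ) (y : ℝ[X]) : jD a b y =
    (1 - X ^ 2) * derivative (derivative y) + (C (b - a) - C (a + b + 2) * X) * derivative y := rfl

lemma iter_jD (a b : ℝ) (y : ℝ[X]) (j : ℕ) : derivative^[j] (jD a b y) =
    (1 - X ^ 2) * derivative^[j + 2] y +
      (C (b - a) - C (a + b + 2) * X - C (2 * (j : ℝ)) * X) * derivative^[j + 1] y +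
      C (-(j : ℝ) * ((j : ℝ) - 1) - (j : ℝ) * (a + b + 2)) * derivative^[j] y := by
  induction j with
  | zero => simp [jD_apply]
  | succ j ih =>
    rw [Function.iterate_succ_apply', ih]
    simp only [Function.iterate_succ_apply', derivative_add, derivative_mul, derivative_sub,
      derivative_C, derivative_X, derivative_one, derivative_X_pow]
    push_cast
    simp only [C_add, C_mul, C_neg, C_sub, map_natCast, map_ofNat, map_one]
    ring

/-- Wronskian. -/
noncomputable def wrO {k : ℕ} (f : Fin k → ℝ[X]) : ℝ[X] :=
  Matrix.det (Matrix.of fun i j : Fin k => derivative^[(j : ℕ)] (f i))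

noncomputable def wrMin {k : ℕ} (f : Fin k → ℝ[X]) (j : Fin (k + 1)) : ℝ[X] :=
  Matrix.det (Matrix.of fun i l : Fin k => derivative^[((j.succAbove l : Fin (k + 1)) : ℕ)] (f i))

noncomputable def wrW {k : ℕ} (f : Fin k → ℝ[X]) : ℝ[X] →ₗ[ℝ] ℝ[X] where
  toFun y := ∑ j : Fin (k + 1), (-1) ^ (j : ℕ) * derivative^[(j : ℕ)] y * wrMin f j
  map_add' y z := by
    simp only [iterate_map_add, mul_add, add_mul, Finset.sum_add_distrib]
  map_smul' c y := by
    simp only [iterate_derivative_smul, RingHom.id_apply, Finset.smul_sum]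
    simp

lemma wrW_apply {k : ℕ} (f : Fin k → ℝ[X]) (y : ℝ[X]) :
    wrW f y = ∑ j : Fin (k + 1), (-1) ^ (j : ℕ) * derivative^[(j : ℕ)] y * wrMin f j := rfl

lemma wrW_eq_det {k : ℕ} (f : Fin k → ℝ[X]) (y : ℝ[X]) :
    wrW f y = Matrix.det (Matrix.of fun i j : Fin (k + 1) =>
      (Fin.cases (derivative^[(j : ℕ)] y) (fun l => derivative^[(j : ℕ)] (f l)) i : ℝ[X])) := by
  rw [Matrix.det_succ_row_zero, wrW_apply]
  refine Finset.sum_congr rfl fun j _ => ?_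
  rfl

lemma wrW_self {k : ℕ} (f : Fin k → ℝ[X]) (i : Fin k) : wrW f (f i) = 0 := by
  rw [wrW_eq_det]
  refine Matrix.det_zero_of_row_eq (i := 0) (j := i.succ) (Fin.succ_ne_zero i).symm ?_
  ext1 j
  simp

lemma wrMin_last {k : ℕ} (f : Fin k → ℝ[X]) : wrMin f (Fin.last k) = wrO f := by
  simp [wrMin, wrO]

lemma derivative_det {k : ℕ} (A : Matrix (Fin k) (Fin k) ℝ[X]) :
    derivative A.det = ∑ j, (A.updateCol j (fun i => derivative (A i j))).det := by
  simp only [Matrix.det_apply, derivative_sum]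
  rw [Finset.sum_comm]
  refine Finset.sum_congr rfl fun σ _ => ?_
  rw [← Finset.smul_sum]
  have : ∀ (u : ℤˣ) (p : ℝ[X]), derivative (u • p) = u • derivative p := by
    intro u p
    rcases Int.units_eq_one_or u with h | h <;> simp [h]
  rw [this, derivative_prod_finset]
  congr 1
  refine Finset.sum_congr rfl fun j _ => ?_
  rw [← Finset.mul_prod_erase _ _ (Finset.mem_univ j), mul_comm]
  congr 1
  · simp
  · refine Finset.prod_congr rfl fun l hl => ?_
    rw [Matrix.updateCol_ne (Finset.ne_of_mem_erase hl)]

lemma derivative_wrO {m : ℕ} (f : Fin (m + 1) → ℝ[X]) :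
    derivative (wrO f) = wrMin f (Fin.last m).castSucc := by
  rw [wrO, derivative_det, Finset.sum_eq_single (Fin.last m)]
  · rw [wrMin]
    congr 1
    ext1 i l
    refine Fin.lastCases ?_ (fun l => ?_) l
    · simp [Function.iterate_succ_apply']
    · rw [Matrix.updateCol_ne (Fin.castSucc_lt_last l).ne]
      simp [Fin.succAbove, Fin.lt_def]
  · intro j _ hj
    obtain ⟨j, rfl⟩ := Fin.exists_castSucc_eq.mpr hj
    refine Matrix.det_zero_of_column_eq (i := j.castSucc) (j := j.succ) ?_ ?_
    · exact Fin.castSucc_lt_succ.ne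
    · intro i
      rw [Matrix.updateCol_ne Fin.castSucc_lt_succ.ne']
      simp [Function.iterate_succ_apply']
  · simp

noncomputable def wrB (a b x : ℝ) {k : ℕ} (f : Fin k → ℝ[X]) (y : ℝ[X]) : ℝ :=
  (wrO f).eval x * (wrW f (jD a b y)).eval x
    - (1 - x ^ 2) * (wrO f).eval x * (derivative (derivative (wrW f y))).eval x
    - ((b - a - (a + b + 2) * x - 2 * k * x) * (wrO f).eval x
        - 2 * (1 - x ^ 2) * (derivative (wrO f)).eval x) * (derivative (wrW f y)).eval x

lemma wrB_add (a b x : ℝ) {k : ℕ} (f : Fin k → ℝ[X]) (y z : ℝ[X]) :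
    wrB a b x f (y + z) = wrB a b x f y + wrB a b x f z := by
  simp only [wrB, map_add, eval_add]; ring

lemma wrB_smul (a b x : ℝ) {k : ℕ} (f : Fin k → ℝ[X]) (c : ℝ) (y : ℝ[X]) :
    wrB a b x f (c • y) = c * wrB a b x f y := by
  simp only [wrB, map_smul, eval_smul, smul_eq_mul]; ring

lemma wrW_span {k : ℕ} (f : Fin k → ℝ[X]) (y : ℝ[X])
    (hy : y ∈ Submodule.span ℝ (Set.range f)) : wrW f y = 0 := by
  have : Submodule.span ℝ (Set.range f) ≤ LinearMap.ker (wrW f) := by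
    rw [Submodule.span_le]
    rintro _ ⟨i, rfl⟩
    exact wrW_self f i
  exact this hy

lemma wrW_eval_zero (x : ℝ) {k : ℕ} (f : Fin k → ℝ[X]) (y : ℝ[X])
    (hy : ∀ j ≤ k, (derivative^[j] y).eval x = 0) : (wrW f y).eval x = 0 := by
  rw [wrW_apply, eval_finsetSum]
  refine Finset.sum_eq_zero fun j _ => ?_
  simp [hy j (Nat.lt_succ_iff.mp j.2)]

lemma wrB_zero (a b x : ℝ) {k : ℕ} (hk : 0 < k) (f : Fin k → ℝ[X]) (y : ℝ[X])
    (hy : ∀ j ≤ k, (derivative^[j] y).eval x = 0) : wrB a b x f y = 0 := by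
  obtain ⟨m, rfl⟩ : ∃ m, k = m + 1 := ⟨k - 1, by omega⟩
  have h0 : ∀ j : Fin m, (derivative^[(j : ℕ)] y).eval x = 0 := fun j => hy _ (by omega)
  have h1 : ∀ j : Fin m, (derivative^[(j : ℕ) + 1] y).eval x = 0 := fun j => hy _ (by omega)
  have h2 : ∀ j : Fin m, (derivative^[(j : ℕ) + 2] y).eval x = 0 := fun j => hy _ (by omega)
  have h3 := hy m (by omega)
  have h4 := hy (m + 1) (by omega)
  have hs : ∀ n : ℕ, derivative ((-1 : ℝ[X]) ^ n) = 0 := fun n => by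
    rw [show ((-1 : ℝ[X]) ^ n) = C ((-1 : ℝ) ^ n) by simp]; exact derivative_C
  have e1 : (derivative (wrW f y)).eval x =
      (-1) ^ (m + 1) * (derivative^[m + 2] y).eval x * (wrO f).eval x := by
    rw [wrW_apply]
    simp only [Fin.sum_univ_castSucc, derivative_add, derivative_sum, derivative_mul, eval_add,
      eval_finsetSum, eval_mul, ← Function.iterate_succ_apply', hs]
    simp [-Function.iterate_succ, add_assoc, h0, h1, h3, h4, wrMin_last]
  have e2 : (derivative (derivative (wrW f y))).eval x =
      (-1) ^ (m + 1) * ((derivative^[m + 3] y).eval x * (wrO f).eval x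
        + (derivative^[m + 2] y).eval x * (derivative (wrO f)).eval x) := by
    rw [wrW_apply]
    simp only [Fin.sum_univ_castSucc, derivative_add, derivative_sum, derivative_mul, eval_add,
      eval_finsetSum, eval_mul, ← Function.iterate_succ_apply', hs]
    simp [-Function.iterate_succ, add_assoc, h0, h1, h2, h3, h4, wrMin_last, derivative_wrO]
    ring
  have e3 : (wrW f (jD a b y)).eval x = (-1) ^ (m + 1) *
      (((1 - x ^ 2) * (derivative^[m + 3] y).eval x +
        (b - a - (a + b + 2) * x - 2 * (m + 1) * x) * (derivative^[m + 2] y).eval x)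
          * (wrO f).eval x
        - (1 - x ^ 2) * (derivative^[m + 2] y).eval x * (derivative (wrO f)).eval x) := by
    rw [wrW_apply]
    simp only [iter_jD, Fin.sum_univ_castSucc, eval_add, eval_finsetSum, eval_mul]
    simp [-Function.iterate_succ, add_assoc, h0, h1, h2, h3, h4, wrMin_last, derivative_wrO]
    ring
  rw [wrB, e1, e2, e3]
  push_cast
  ring

lemma wrB_eq (a b x : ℝ) {k : ℕ} (hk : 0 < k) (f : Fin k → ℝ[X])
    (hf : ∀ i, jD a b (f i) ∈ Submodule.span ℝ (Set.range f))
    (hx : (wrO f).eval x ≠ 0) : ∃ c : ℝ, ∀ y, wrB a b x f y = c * (wrW f y).eval x := by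
  have hBf : ∀ i, wrB a b x f (f i) = 0 := fun i => by
    simp [wrB, wrW_self, wrW_span f _ (hf i)]
  have hB0 : wrB a b x f 0 = 0 := by simp [wrB]
  have hBsum : ∀ c : Fin k → ℝ, wrB a b x f (∑ i, c i • f i) = 0 := by
    intro c
    have := map_sum (AddMonoidHom.mk' (wrB a b x f) (wrB_add a b x f)) (fun i => c i • f i) univ
    simp only [AddMonoidHom.mk'_apply] at this
    rw [this]
    exact Finset.sum_eq_zero fun i _ => by rw [wrB_smul, hBf, mul_zero]
  have hWsum : ∀ c : Fin k → ℝ, wrW f (∑ i, c i • f i) = 0 := by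
    intro c
    rw [map_sum]
    exact Finset.sum_eq_zero fun i _ => by rw [map_smul, wrW_self, smul_zero]
  set A : Matrix (Fin k) (Fin k) ℝ :=
    Matrix.of fun i j => (derivative^[(j : ℕ)] (f i)).eval x with hA
  have hAdet : A.det = (wrO f).eval x := by
    rw [wrO, ← coe_evalRingHom, RingHom.map_det]; rfl
  have hAu : IsUnit A.det := by rw [hAdet]; exact hx.isUnit
  set e : ℝ[X] := (X - C x) ^ k with he
  have hej : ∀ j < k, (derivative^[j] e).eval x = 0 := by
    intro j hj
    rw [he, iterate_derivative_X_sub_pow]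
    simp [Nat.sub_ne_zero_of_lt hj]
  have hek : (derivative^[k] e).eval x = k.factorial := by
    rw [he, iterate_derivative_X_sub_pow_self]; simp
  have hWe : (wrW f e).eval x = (-1) ^ k * k.factorial * (wrO f).eval x := by
    rw [wrW_apply, Fin.sum_univ_castSucc]
    simp [eval_finsetSum, hej, hek, wrMin_last]
  have hWe0 : (wrW f e).eval x ≠ 0 := by
    rw [hWe]
    have : (k.factorial : ℝ) ≠ 0 := by exact_mod_cast k.factorial_ne_zero
    simp [hx, this]
  refine ⟨wrB a b x f e / (wrW f e).eval x, fun y => ?_⟩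
  set v : Fin k → ℝ := fun j => (derivative^[(j : ℕ)] y).eval x
  set c : Fin k → ℝ := Matrix.vecMul v A⁻¹ with hc
  have hcA : Matrix.vecMul c A = v := by
    rw [hc, Matrix.vecMul_vecMul, Matrix.nonsing_inv_mul _ hAu, Matrix.vecMul_one]
  set z : ℝ[X] := ∑ i, c i • f i with hz
  have hzj : ∀ j, (derivative^[j] z).eval x = ∑ i, c i * (derivative^[j] (f i)).eval x := by
    intro j
    rw [hz, iterate_derivative_sum, eval_finsetSum]
    simp [iterate_derivative_smul]
  set d : ℝ := (derivative^[k] (y + (-1 : ℝ) • z)).eval x / k.factorial with hd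
  have hk0 : (k.factorial : ℝ) ≠ 0 := by exact_mod_cast k.factorial_ne_zero
  set r : ℝ[X] := y + (-1 : ℝ) • z + (-d) • e with hr
  have hrj : ∀ j ≤ k, (derivative^[j] r).eval x = 0 := by
    intro j hj
    rcases hj.lt_or_eq with hj | rfl
    · have h1 := congrFun hcA ⟨j, hj⟩
      simp only [Matrix.vecMul, dotProduct, hA, Matrix.of_apply] at h1
      rw [hr]
      simp only [iterate_map_add, iterate_derivative_smul, eval_add, eval_smul, hej j hj,
        hzj, h1]
      simp [v]
    · rw [hr, iterate_map_add, eval_add, iterate_derivative_smul, eval_smul, hek, hd]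
      rw [smul_eq_mul, neg_mul, div_mul_cancel₀ _ hk0, add_neg_cancel]
  have hyr : y = r + (z + d • e) := by rw [hr]; module
  clear_value r
  have hB : wrB a b x f y = d * wrB a b x f e := by
    rw [hyr, wrB_add, wrB_add, wrB_smul, wrB_zero a b x hk f r hrj, hz, hBsum]; ring
  have hW : (wrW f y).eval x = d * (wrW f e).eval x := by
    rw [hyr, map_add, map_add, map_smul, eval_add, wrW_eval_zero x f r hrj, hz, hWsum]; simp
  rw [hB, hW]
  field_simp

lemma wr_bilinear (a b x : ℝ) {k : ℕ} (hk : 0 < k) (f : Fin k → ℝ[X])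
    (hf : ∀ i, jD a b (f i) ∈ Submodule.span ℝ (Set.range f))
    (hx : (wrO f).eval x ≠ 0) (y z : ℝ[X]) (l₁ l₂ : ℝ) (hy : jD a b y = l₁ • y)
    (hz : jD a b z = l₂ • z) :
    (l₁ - l₂) * (wrO f).eval x * (wrW f y).eval x * (wrW f z).eval x =
      (1 - x ^ 2) * (wrO f).eval x *
        ((derivative (derivative (wrW f y))).eval x * (wrW f z).eval x
          - (wrW f y).eval x * (derivative (derivative (wrW f z))).eval x)
      + ((b - a - (a + b + 2) * x - 2 * k * x) * (wrO f).eval x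
        - 2 * (1 - x ^ 2) * (derivative (wrO f)).eval x) *
        ((derivative (wrW f y)).eval x * (wrW f z).eval x
          - (wrW f y).eval x * (derivative (wrW f z)).eval x) := by
  obtain ⟨c, hc⟩ := wrB_eq a b x hk f hf hx
  have h1 := hc y
  have h2 := hc z
  simp only [wrB, hy, hz, map_smul, eval_smul, smul_eq_mul] at h1 h2
  linear_combination (wrW f z).eval x * h1 - (wrW f y).eval x * h2

lemma exists_antideriv (p : ℝ[X]) : ∃ q : ℝ[X], derivative q = p := by
  induction p using Polynomial.induction_on' with
  | add p q hp hq =>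
    obtain ⟨p', rfl⟩ := hp
    obtain ⟨q', rfl⟩ := hq
    exact ⟨p' + q', by simp⟩
  | monomial n a =>
    refine ⟨monomial (n + 1) (a / (n + 1)), ?_⟩
    rw [derivative_monomial]
    have : (n : ℝ) + 1 ≠ 0 := by positivity
    simp only [Nat.add_sub_cancel, Nat.cast_add, Nat.cast_one]
    rw [div_mul_cancel₀ _ this]

lemma wrW_surj {k : ℕ} (hk : 0 < k) (f : Fin k → ℝ[X]) (h : ℝ[X]) :
    ∃ y, wrW f y = wrO f ^ 2 * h := by
  obtain ⟨m, rfl⟩ : ∃ m, k = m + 1 := ⟨k - 1, by omega⟩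
  set A : Matrix (Fin (m + 1)) (Fin (m + 1)) ℝ[X] :=
    Matrix.of fun i j => derivative^[(j : ℕ)] (f i) with hA
  have hAO : A.det = wrO f := rfl
  choose c hc using fun i => exists_antideriv ((-1) ^ (m + 1) * h * A.adjugate (Fin.last m) i)
  have hadj : ∀ j : Fin (m + 1), ∑ i, derivative (c i) * derivative^[(j : ℕ)] (f i) =
      if j = Fin.last m then (-1) ^ (m + 1) * h * wrO f else 0 := by
    intro j
    have h1 := congrFun (congrFun (Matrix.adjugate_mul A) (Fin.last m)) j
    rw [Matrix.mul_apply, hAO] at h1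
    simp only [hc, mul_assoc, ← Finset.mul_sum]
    simp only [hA, Matrix.of_apply] at h1
    rw [hA, h1]
    by_cases hj : j = Fin.last m
    · simp [hj]
    · simp [hj, Ne.symm hj]
  have hder : ∀ j ≤ m, derivative^[j] (∑ i, c i * f i) = ∑ i, c i * derivative^[j] (f i) := by
    intro j
    induction j with
    | zero => intro _; rfl
    | succ j ih =>
      intro hj
      have h1 := hadj ⟨j, by omega⟩
      rw [if_neg (by simp [Fin.ext_iff]; omega)] at h1
      rw [Function.iterate_succ_apply', ih (by omega), derivative_sum]
      simp only [derivative_mul, Finset.sum_add_distrib]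
      simp only at h1
      rw [h1, zero_add]
      simp only [Function.iterate_succ_apply']
  have hder2 : derivative^[m + 1] (∑ i, c i * f i) =
      (-1) ^ (m + 1) * h * wrO f + ∑ i, c i * derivative^[m + 1] (f i) := by
    have h1 := hadj (Fin.last m)
    rw [if_pos rfl] at h1
    rw [Function.iterate_succ_apply', hder m le_rfl, derivative_sum]
    simp only [derivative_mul, Finset.sum_add_distrib]
    simp only [Fin.val_last] at h1
    rw [h1]
    simp only [Function.iterate_succ_apply']
  refine ⟨∑ i, c i * f i, ?_⟩
  have hz : ∑ i, c i * wrW f (f i) = 0 := Finset.sum_eq_zero fun i _ => by rw [wrW_self, mul_zero]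
  have hz2 : ∑ i, c i * wrW f (f i) = ∑ j : Fin (m + 2), (-1) ^ (j : ℕ) *
      (∑ i, c i * derivative^[(j : ℕ)] (f i)) * wrMin f j := by
    simp only [wrW_apply, Finset.mul_sum, Finset.sum_mul]
    rw [Finset.sum_comm]
    refine Finset.sum_congr rfl fun j _ => Finset.sum_congr rfl fun i _ => by ring
  rw [hz2, Fin.sum_univ_castSucc] at hz
  rw [wrW_apply, Fin.sum_univ_castSucc]
  simp only [Fin.val_castSucc, Fin.val_last] at hz ⊢
  rw [hder2]
  have : ∀ j : Fin (m + 1), derivative^[(j : ℕ)] (∑ i, c i * f i) =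
    ∑ i, c i * derivative^[(j : ℕ)] (f i) := fun j => hder _ (by omega)
  simp only [this]
  have hsq : ((-1 : ℝ[X]) ^ (m + 1)) ^ 2 = 1 := by rw [← pow_mul, mul_comm, pow_mul]; simp
  rw [wrMin_last] at hz ⊢
  linear_combination hz + h * wrO f ^ 2 * hsq

end ExcProof


section ExcProof2
open Polynomial

lemma coeff_jD (a b : ℝ) (y : ℝ[X]) (j : ℕ) : (jD a b y).coeff j =
    ((j : ℝ) + 2) * (j + 1) * y.coeff (j + 2) + (b - a) * (j + 1) * y.coeff (j + 1)
      - j * (j + a + b + 1) * y.coeff j := by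
  rw [jD_apply, sub_mul, one_mul, sub_mul, mul_assoc (C (a + b + 2))]
  simp only [coeff_add, coeff_sub, coeff_C_mul, coeff_derivative]
  rcases j with _ | _ | j
  · simp [coeff_X_pow_mul', coeff_derivative]; ring
  · simp [coeff_X_pow_mul', coeff_derivative, coeff_X_mul]; ring
  · rw [coeff_X_pow_mul, coeff_X_mul]
    simp only [coeff_derivative]
    push_cast
    ring

lemma eig_top (a b μ : ℝ) (y r : ℝ[X]) (h : jD a b y = μ • y + r) :
    (-((y.natDegree : ℝ) * (y.natDegree + a + b + 1)) - μ) * y.coeff y.natDegree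
      = r.coeff y.natDegree := by
  have h1 := congrArg (fun p => coeff p y.natDegree) h
  simp only [coeff_jD, coeff_add, coeff_smul, smul_eq_mul] at h1
  rw [coeff_eq_zero_of_natDegree_lt (show y.natDegree < y.natDegree + 2 by omega),
    coeff_eq_zero_of_natDegree_lt (show y.natDegree < y.natDegree + 1 by omega)] at h1
  linarith

lemma eig_deg (a b : ℝ) (n : ℕ) (y : ℝ[X]) (hy : y ≠ 0)
    (h : jD a b y = (-((n : ℝ) * (n + a + b + 1))) • y) :
    y.natDegree = n ∨ (y.natDegree : ℝ) + n + a + b + 1 = 0 := by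
  have h1 := eig_top a b _ y 0 (by rw [h, add_zero])
  have h2 : y.coeff y.natDegree ≠ 0 := by
    rw [coeff_natDegree]; exact leadingCoeff_ne_zero.mpr hy
  rw [coeff_zero] at h1
  have h3 := (mul_eq_zero.mp h1).resolve_right h2
  have h4 : ((y.natDegree : ℝ) - n) * ((y.natDegree : ℝ) + n + a + b + 1) = 0 := by
    linear_combination -h3
  rcases mul_eq_zero.mp h4 with h5 | h5
  · left; exact_mod_cast sub_eq_zero.mp h5
  · right; exact h5

noncomputable def JP (a b : ℝ) (n : ℕ) : ℝ[X] :=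
  C ((2 : ℝ)⁻¹ ^ n) * ∑ j ∈ Finset.range (n + 1),
    C (genBinom ((n : ℝ) + a) j * genBinom ((n : ℝ) + b) (n - j)) *
      ((X - 1) ^ (n - j) * (X + 1) ^ j)

lemma eval_JP (a b : ℝ) (n : ℕ) (x : ℝ) : (JP a b n).eval x = jacobiP a b n x := by
  simp only [JP, jacobiP, eval_mul, eval_C, eval_finsetSum, eval_pow, eval_sub, eval_add, eval_X,
    eval_one]
  congr 1
  exact Finset.sum_congr rfl fun j _ => by ring

lemma jD_term (a b : ℝ) (m j : ℕ) : jD a b ((X - 1) ^ m * (X + 1) ^ j) =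
    -(C ((m : ℝ) * (m + a)) * ((X - 1) ^ (m - 1) * (X + 1) ^ (j + 1)))
    - C ((j : ℝ) * (j + b)) * ((X - 1) ^ (m + 1) * (X + 1) ^ (j - 1))
    - C (2 * (m : ℝ) * j + (a + 1) * j + (b + 1) * m) * ((X - 1) ^ m * (X + 1) ^ j) := by
  have h1 : ∀ m : ℕ, derivative ((X - 1 : ℝ[X]) ^ m) = C (m : ℝ) * (X - 1) ^ (m - 1) := by
    intro m; rw [derivative_pow]; simp
  have h2 : ∀ m : ℕ, derivative ((X + 1 : ℝ[X]) ^ m) = C (m : ℝ) * (X + 1) ^ (m - 1) := by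
    intro m; rw [derivative_pow]; simp
  rw [jD_apply]
  simp only [derivative_mul, derivative_add, h1, h2, derivative_C]
  rcases m with _ | _ | m <;> rcases j with _ | _ | j <;>
  · simp only [C_add, C_mul, C_sub, map_natCast, map_ofNat, map_one, Nat.add_sub_cancel, zero_add,
      Nat.cast_zero, Nat.cast_add, Nat.cast_one, Nat.reduceAdd, Nat.reduceSub, map_zero,
      Nat.add_one_sub_one]
    ring

lemma genBinom_succ (z : ℝ) (k : ℕ) :
    ((k : ℝ) + 1) * genBinom z (k + 1) = (z - k) * genBinom z k := by
  have h1 : ((k : ℝ) + 1) ≠ 0 := by positivity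
  have h2 : (k.factorial : ℝ) ≠ 0 := by exact_mod_cast k.factorial_ne_zero
  rw [genBinom, genBinom, Finset.prod_range_succ, Nat.factorial_succ]
  push_cast
  field_simp

lemma jD_JP (a b : ℝ) (n : ℕ) : jD a b (JP a b n) = (-((n : ℝ) * (n + a + b + 1))) • JP a b n := by
  set c : ℕ → ℝ := fun j => genBinom ((n : ℝ) + a) j * genBinom ((n : ℝ) + b) (n - j) with hc
  set t : ℕ → ℝ[X] := fun j => (X - 1) ^ (n - j) * (X + 1) ^ j with ht
  set t' : ℕ → ℝ[X] := fun j => (X - 1) ^ (n - j + 1) * (X + 1) ^ (j - 1) with ht'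
  set w : ℕ → ℝ := fun j => if j = n + 1 then 0 else (j : ℝ) * (j + b) * c j with hw
  have hw1 : ∀ j ≤ n, w (j + 1) = ((n : ℝ) - j) * (n - j + a) * c j := by
    intro j hj
    rcases hj.lt_or_eq with hj | rfl
    · obtain ⟨r, rfl⟩ : ∃ r, n = j + r + 1 := ⟨n - j - 1, by omega⟩
      have e1 := genBinom_succ (((j + r + 1 : ℕ) : ℝ) + a) j
      have e2 := genBinom_succ (((j + r + 1 : ℕ) : ℝ) + b) r
      simp only [hw, hc]
      rw [if_neg (by omega), show j + r + 1 - j = r + 1 by omega,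
        show j + r + 1 - (j + 1) = r by omega]
      generalize genBinom (((j + r + 1 : ℕ) : ℝ) + a) j = A at *
      generalize genBinom (((j + r + 1 : ℕ) : ℝ) + a) (j + 1) = A' at *
      generalize genBinom (((j + r + 1 : ℕ) : ℝ) + b) r = B at *
      generalize genBinom (((j + r + 1 : ℕ) : ℝ) + b) (r + 1) = B' at *
      push_cast at *
      linear_combination (j + 1 + b) * B * e1 - (r + 1 + a) * A * e2
    · simp [hw]
  have hterm : ∀ j ∈ Finset.range (n + 1), jD a b (C (c j) * t j) =
      C (-((n : ℝ) * (n + a + b + 1))) * (C (c j) * t j)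
      - (C (w (j + 1)) * t (j + 1) - C (w j) * t j)
      + (C (w (j + 1)) * t' (j + 1) - C (w j) * t' j) := by
    intro j hj
    have hj : j ≤ n := Nat.lt_succ_iff.mp (Finset.mem_range.mp hj)
    have hwj : w j = (j : ℝ) * (j + b) * c j := by simp only [hw]; rw [if_neg (by omega)]
    have hw0 := hw1 j hj
    have ht1 : C (w (j + 1)) * t' (j + 1) = C (w (j + 1)) * t j := by
      rcases hj.lt_or_eq with hj | rfl
      · simp only [ht, ht']; rw [show n - (j + 1) + 1 = n - j by omega, Nat.add_sub_cancel]
      · simp [hw]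
    rw [ht1, hw0, hwj, ← smul_eq_C_mul, map_smul, smul_eq_C_mul]
    simp only [ht]
    rw [jD_term, Nat.cast_sub hj, show n - j - 1 = n - (j + 1) by omega]
    simp only [ht', smul_eq_C_mul, C_add, C_mul, C_sub, C_neg, map_natCast, map_ofNat, map_one]
    ring
  have hJ : JP a b n = ((2 : ℝ)⁻¹ ^ n) • ∑ j ∈ Finset.range (n + 1), C (c j) * t j := by
    rw [smul_eq_C_mul]; rfl
  rw [hJ, map_smul, smul_comm]
  congr 1
  rw [map_sum, Finset.sum_congr rfl hterm, Finset.sum_add_distrib, Finset.sum_sub_distrib,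
    Finset.sum_range_sub (fun j => C (w j) * t j), Finset.sum_range_sub (fun j => C (w j) * t' j),
    ← Finset.mul_sum, smul_eq_C_mul]
  have e0 : w 0 = 0 := by simp [hw]
  have e1 : w (n + 1) = 0 := by simp [hw]
  simp [e0, e1]

lemma JP_natDegree_le (a b : ℝ) (n : ℕ) : (JP a b n).natDegree ≤ n := by
  rw [JP]
  refine (natDegree_C_mul_le _ _).trans ?_
  refine natDegree_sum_le_of_forall_le _ _ fun j hj => ?_
  have hj : j ≤ n := Nat.lt_succ_iff.mp (Finset.mem_range.mp hj)
  refine (natDegree_C_mul_le _ _).trans ?_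
  refine natDegree_mul_le.trans ?_
  have h1 : ((X - 1 : ℝ[X]) ^ (n - j)).natDegree ≤ n - j := by
    refine natDegree_pow_le.trans ?_
    rw [show (X - 1 : ℝ[X]) = X - C 1 by simp, natDegree_X_sub_C, mul_one]
  have h2 : ((X + 1 : ℝ[X]) ^ j).natDegree ≤ j := by
    refine natDegree_pow_le.trans ?_
    rw [show (X + 1 : ℝ[X]) = X + C 1 by simp, natDegree_X_add_C, mul_one]
  omega

lemma jacobiP_one (a b : ℝ) (n : ℕ) : jacobiP a b n 1 = genBinom ((n : ℝ) + a) n := by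
  rw [jacobiP, Finset.sum_eq_single n]
  · simp [genBinom]; norm_num
    rw [mul_comm, mul_assoc, mul_inv_cancel₀ (by positivity), mul_one]
  · intro j hj hjn
    have : n - j ≠ 0 := by have := Finset.mem_range.mp hj; omega
    simp [this]
  · simp

lemma genBinom_ne (z : ℝ) (k : ℕ) (h : ∀ i < k, z - i ≠ 0) : genBinom z k ≠ 0 := by
  rw [genBinom]
  refine div_ne_zero (Finset.prod_ne_zero_iff.mpr fun i hi => h i (Finset.mem_range.mp hi)) ?_
  exact_mod_cast k.factorial_ne_zero

lemma genBinom_nonneg (N k : ℕ) : 0 ≤ genBinom (N : ℝ) k := by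
  rw [genBinom]
  refine div_nonneg ?_ (by positivity)
  by_cases h : k ≤ N
  · refine Finset.prod_nonneg fun i hi => ?_
    have : i ≤ N := by have := Finset.mem_range.mp hi; omega
    have : (i : ℝ) ≤ N := by exact_mod_cast this
    linarith
  · rw [Finset.prod_eq_zero (i := N) (Finset.mem_range.mpr (by omega)) (by simp)]

lemma genBinom_pos (N k : ℕ) (h : k ≤ N) : 0 < genBinom (N : ℝ) k := by
  refine lt_of_le_of_ne (genBinom_nonneg N k) (genBinom_ne _ _ fun i hi => ?_).symm
  have : (i : ℝ) < N := by exact_mod_cast (by omega : i < N)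
  linarith

/-- nonvanishing, small degree -/
lemma JP_ne_small (a b : ℝ) (n : ℕ) (h : ∀ i < n, (n : ℝ) + a - i ≠ 0) : JP a b n ≠ 0 := by
  intro h0
  have h1 : (JP a b n).eval 1 = 0 := by rw [h0]; simp
  rw [eval_JP, jacobiP_one] at h1
  exact genBinom_ne _ _ h h1

lemma JP_ne_large (a b n : ℕ) (h : a + b ≤ n) : JP (-(a : ℝ)) (-(b : ℝ)) n ≠ 0 := by
  intro h0
  have h1 : (JP (-(a : ℝ)) (-(b : ℝ)) n).eval 2 = 0 := by rw [h0]; simp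
  rw [eval_JP, jacobiP] at h1
  have ha : (n : ℝ) + -(a : ℝ) = ((n - a : ℕ) : ℝ) := by rw [Nat.cast_sub (by omega)]; ring
  have hb : (n : ℝ) + -(b : ℝ) = ((n - b : ℕ) : ℝ) := by rw [Nat.cast_sub (by omega)]; ring
  rw [ha, hb] at h1
  have : 0 < ∑ j ∈ Finset.range (n + 1), genBinom ((n - a : ℕ) : ℝ) j *
      genBinom ((n - b : ℕ) : ℝ) (n - j) * ((2 : ℝ) - 1) ^ (n - j) * ((2 : ℝ) + 1) ^ j := by
    refine Finset.sum_pos' (fun j _ => ?_) ⟨b, Finset.mem_range.mpr (by omega), ?_⟩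
    · have := genBinom_nonneg (n - a) j
      have := genBinom_nonneg (n - b) (n - j)
      norm_num; positivity
    · have := genBinom_pos (n - a) b (by omega)
      have := genBinom_pos (n - b) (n - b) le_rfl
      norm_num; positivity
  have h2 : (0 : ℝ) < (2 : ℝ)⁻¹ ^ n := by positivity
  have := mul_pos h2 this
  linarith

end ExcProof2


section ExcProof3
open Polynomial

noncomputable def zP : ℝ[X] := C (2⁻¹ : ℝ) * (1 - X)

lemma eval_zP (x : ℝ) : zP.eval x = (1 - x) / 2 := by
  simp [zP]; ring

lemma derivative_zP : derivative zP = C (-(2⁻¹ : ℝ)) := by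
  simp [zP]

lemma jD_zP (A B : ℝ) (j : ℕ) : jD A B (zP ^ j) =
    C ((j : ℝ) * (j + A)) * zP ^ (j - 1) - C ((j : ℝ) * (j + A + B + 1)) * zP ^ j := by
  have hX : (X : ℝ[X]) = 1 - C 2 * zP := by
    rw [zP, ← mul_assoc, ← C_mul]; norm_num
  have h1 : ∀ m : ℕ, derivative (zP ^ m) = C (-(2⁻¹ : ℝ) * m) * zP ^ (m - 1) := by
    intro m; rw [derivative_pow, derivative_zP, C_mul]; simp; ring
  have h2 : (C (2⁻¹ : ℝ)) * C 2 = 1 := by rw [← C_mul]; norm_num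
  have h4 : (C (2⁻¹ : ℝ)) * C (2⁻¹ : ℝ) * 4 = 1 := by
    rw [show (4 : ℝ[X]) = C 4 from (map_ofNat C 4).symm, ← C_mul, ← C_mul]; norm_num
  have h2' : (C (2⁻¹ : ℝ)) * 2 = 1 := by
    rw [show (2 : ℝ[X]) = C 2 from (map_ofNat C 2).symm, ← C_mul]; norm_num
  rw [jD_apply, h1, derivative_C_mul, h1, hX]
  generalize hz : zP = z
  rcases j with _ | _ | j
  · simp
  · simp only [C_add, C_mul, C_sub, C_neg, map_natCast, map_ofNat, map_one, zero_add, Nat.cast_one,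
      Nat.cast_zero, map_zero, Nat.reduceSub, pow_zero, pow_one]
    linear_combination (1 + C A - (C A + C B + 2) * z) * h2'
  · simp only [C_add, C_mul, C_sub, C_neg, map_natCast, map_ofNat, map_one, Nat.cast_add, Nat.cast_one,
      Nat.add_sub_cancel]
    linear_combination (((j : ℝ[X]) + 1 + 1) * z ^ (j + 1) * (1 + C A - (C A + C B + 2) * z)) * h2' + (((j : ℝ[X]) + 1 + 1) * ((j : ℝ[X]) + 1) * z ^ (j + 1) * (1 - z)) * h4

noncomputable def zS (Bc : ℕ → ℝ) (u : ℕ) : ℝ[X] := ∑ j ∈ Finset.range u, C (Bc j) * zP ^ j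

lemma jD_zS (A B : ℝ) (Bc : ℕ → ℝ) (u : ℕ) : jD A B (zS Bc (u + 1)) =
    (-((u : ℝ) * (u + A + B + 1))) • zS Bc (u + 1) +
    zS (fun j => ((j : ℝ) + 1) * (j + 1 + A) * Bc (j + 1) -
      ((j : ℝ) - u) * (j + u + A + B + 1) * Bc j) u := by
  have h1 : jD A B (zS Bc (u + 1)) = ∑ j ∈ Finset.range (u + 1),
      C (Bc j * ((j : ℝ) * (j + A))) * zP ^ (j - 1)
      - ∑ j ∈ Finset.range (u + 1), C (Bc j * ((j : ℝ) * (j + A + B + 1))) * zP ^ j := by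
    rw [zS, map_sum, ← Finset.sum_sub_distrib]
    refine Finset.sum_congr rfl fun j _ => ?_
    rw [← smul_eq_C_mul, map_smul, jD_zP, smul_eq_C_mul, mul_sub, ← mul_assoc, ← mul_assoc,
      ← C_mul, ← C_mul]
  rw [h1, Finset.sum_range_succ', Finset.sum_range_succ, zS, Finset.sum_range_succ, zS]
  simp only [Nat.cast_zero, zero_mul, mul_zero, C_0, add_zero, Nat.add_sub_cancel, smul_add,
    Finset.smul_sum, smul_eq_C_mul]
  rw [sub_add_eq_sub_sub, ← Finset.sum_sub_distrib, add_right_comm (∑ x ∈ range u, _), ← Finset.sum_add_distrib,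
    sub_eq_add_neg]
  congr 1
  · refine Finset.sum_congr rfl fun j _ => ?_
    simp only [C_add, C_mul, C_sub, C_neg, map_natCast, map_ofNat, map_one, Nat.cast_add,
      Nat.cast_one]
    ring
  · simp only [C_add, C_mul, C_sub, C_neg, map_natCast, map_ofNat, map_one]
    ring

lemma natDegree_zP_pow (j : ℕ) : (zP ^ j).natDegree ≤ j := by
  refine natDegree_pow_le.trans ?_
  have : zP.natDegree ≤ 1 := by
    rw [zP]
    refine (natDegree_C_mul_le _ _).trans ?_
    refine (natDegree_sub_le _ _).trans ?_
    simp
  nlinarith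

lemma coeff_zP_pow (j : ℕ) : (zP ^ j).coeff j = (-(2⁻¹ : ℝ)) ^ j := by
  have : zP.natDegree ≤ 1 := by simpa using natDegree_zP_pow 1
  have h := coeff_pow_of_natDegree_le (m := j) this
  rw [mul_one] at h
  rw [h]
  congr 1
  simp [zP, coeff_one]

lemma zS_natDegree_le (Bc : ℕ → ℝ) (u : ℕ) : (zS Bc (u + 1)).natDegree ≤ u := by
  refine natDegree_sum_le_of_forall_le _ _ fun j hj => ?_
  have := Finset.mem_range.mp hj
  exact (natDegree_C_mul_le _ _).trans ((natDegree_zP_pow j).trans (by omega))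

lemma zS_coeff (Bc : ℕ → ℝ) (u : ℕ) : (zS Bc (u + 1)).coeff u = Bc u * (-(2⁻¹ : ℝ)) ^ u := by
  rw [zS, Finset.sum_range_succ, coeff_add, coeff_C_mul, coeff_zP_pow, finsetSum_coeff,
    Finset.sum_eq_zero, zero_add]
  intro j hj
  rw [coeff_C_mul, coeff_eq_zero_of_natDegree_lt, mul_zero]
  exact (natDegree_zP_pow j).trans_lt (Finset.mem_range.mp hj)

/-- coefficients of the hypergeometric function -/
noncomputable def AA (A B : ℝ) (u j : ℕ) (s : ℝ) : ℝ :=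
  poch (-(u : ℝ)) j * poch ((u : ℝ) - s + A + B + 1) j /
          (poch (A - s + 1) j * (j.factorial : ℝ))

lemma poch_succ (z : ℝ) (j : ℕ) : poch z (j + 1) = poch z j * (z + j) := by
  rw [poch, poch, Finset.prod_range_succ]

lemma poch_ne (z : ℝ) (j : ℕ) (h : ∀ i < j, z + i ≠ 0) : poch z j ≠ 0 :=
  Finset.prod_ne_zero_iff.mpr fun i hi => h i (Finset.mem_range.mp hi)

lemma AA_diff (A B : ℝ) (u j : ℕ) (h : ∀ i < j, A + 1 + i ≠ 0) :
    DifferentiableAt ℝ (AA A B u j) 0 := by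
  have h1 : poch (A - 0 + 1) j * (j.factorial : ℝ) ≠ 0 := by
    refine mul_ne_zero (poch_ne _ _ ?_) (by exact_mod_cast j.factorial_ne_zero)
    intro i hi; rw [sub_zero]; exact h i hi
  unfold AA
  refine DifferentiableAt.div ?_ ?_ h1
  · unfold poch; fun_prop
  · unfold poch; fun_prop

lemma AA_rec (A B : ℝ) (u j : ℕ) (s : ℝ) (h : A - s + 1 + j ≠ 0) :
    AA A B u (j + 1) s * ((A - s + 1 + j) * (j + 1)) =
      AA A B u j s * (((j : ℝ) - u) * (u - s + A + B + 1 + j)) := by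
  have h1 : ((j : ℝ) + 1) ≠ 0 := by positivity
  have h2 : (j.factorial : ℝ) ≠ 0 := by exact_mod_cast j.factorial_ne_zero
  rw [AA, AA, poch_succ, poch_succ, poch_succ, Nat.factorial_succ]
  push_cast
  by_cases h3 : poch (A - s + 1) j = 0
  · simp [h3]
  field_simp
  ring

lemma AD_rec (A B : ℝ) (u j : ℕ) (h : ∀ i < j + 1, A + 1 + i ≠ 0) :
    ((j : ℝ) + 1) * (j + 1 + A) * deriv (AA A B u (j + 1)) 0 -
      ((j : ℝ) - u) * (j + u + A + B + 1) * deriv (AA A B u j) 0 =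
    ((j : ℝ) + 1) * AA A B u (j + 1) 0 - ((j : ℝ) - u) * AA A B u j 0 := by
  have d1 := (AA_diff A B u (j + 1) h).hasDerivAt
  have d2 := (AA_diff A B u j fun i hi => h i (by omega)).hasDerivAt
  have e1 : HasDerivAt (fun s : ℝ => (A - s + 1 + j) * ((j : ℝ) + 1)) (-((j : ℝ) + 1)) 0 := by
    have := ((((hasDerivAt_id (0 : ℝ)).const_sub A).add_const (1 : ℝ)).add_const (j : ℝ)).mul_const
      ((j : ℝ) + 1)
    simpa using this
  have e2 : HasDerivAt (fun s : ℝ => ((j : ℝ) - u) * (u - s + A + B + 1 + j)) (-((j : ℝ) - u)) 0 := by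
    have := ((((((hasDerivAt_id (0 : ℝ)).const_sub (u : ℝ)).add_const A).add_const B).add_const
      (1 : ℝ)).add_const (j : ℝ)).const_mul ((j : ℝ) - u)
    simpa using this
  have f1 := d1.mul e1
  have f2 := d2.mul e2
  have hev : ∀ᶠ s : ℝ in nhds 0, A - s + 1 + j ≠ 0 := by
    have hc : ContinuousAt (fun s : ℝ => A - s + 1 + j) 0 := by fun_prop
    refine hc.eventually_ne ?_
    have := h j (by omega)
    simpa using this
  have hE : (AA A B u (j + 1) * fun s : ℝ => (A - s + 1 + j) * ((j : ℝ) + 1)) =ᶠ[nhds 0]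
      (AA A B u j * fun s : ℝ => ((j : ℝ) - u) * (u - s + A + B + 1 + j)) := by
    filter_upwards [hev] with s hs
    exact AA_rec A B u j s hs
  have := (f1.congr_of_eventuallyEq hE.symm).unique f2
  simp only [sub_zero] at this
  linear_combination this

lemma eig_unique (a b : ℝ) (n : ℕ) (y z : ℝ[X])
    (hy : jD a b y = (-((n : ℝ) * (n + a + b + 1))) • y)
    (hz : jD a b z = (-((n : ℝ) * (n + a + b + 1))) • z)
    (dy : y.natDegree ≤ n) (dz : z.natDegree ≤ n) (cz : z.coeff n ≠ 0)
    (hn : ∀ m : ℕ, m < n → (m : ℝ) + n + a + b + 1 ≠ 0) : ∃ c : ℝ, y = c • z := by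
  refine ⟨y.coeff n / z.coeff n, ?_⟩
  set c := y.coeff n / z.coeff n with hc
  by_contra hne
  have hD : y - c • z ≠ 0 := sub_ne_zero.mpr hne
  have hc0 : (y - c • z).coeff n = 0 := by
    rw [coeff_sub, coeff_smul, smul_eq_mul, hc]; field_simp; ring
  have hle : (y - c • z).natDegree ≤ n :=
    (natDegree_sub_le _ _).trans (max_le dy ((natDegree_smul_le _ _).trans dz))
  have hlt : (y - c • z).natDegree ≠ n := by
    intro h
    rw [← h, coeff_natDegree] at hc0
    exact hD (leadingCoeff_eq_zero.mp hc0)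
  have he : jD a b (y - c • z) = (-((n : ℝ) * (n + a + b + 1))) • (y - c • z) := by
    rw [map_sub, map_smul, hy, hz, smul_sub, smul_comm]
  rcases eig_deg a b n _ hD he with h | h
  · exact hlt h
  · exact hn _ (by omega) h

end ExcProof3


section ExcProof4
open Polynomial

lemma jD_conj_aux (a : ℕ) (ha : 1 ≤ a) (B : ℝ) (y : ℝ[X]) :
    jD (-(a : ℝ)) B ((1 - X) ^ a * y) =
      (1 - X) ^ a * (jD (a : ℝ) B y - C ((a : ℝ) * (B + 1)) * y) := by
  have h1 : ∀ m : ℕ, derivative ((1 - X : ℝ[X]) ^ m) = - (C (m : ℝ) * (1 - X) ^ (m - 1)) := by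
    intro m; rw [derivative_pow]; simp
  rw [jD_apply, jD_apply]
  simp only [derivative_mul, derivative_add, h1, derivative_C, derivative_neg]
  have hX : (X : ℝ[X]) = 1 - (1 - X) := by ring
  generalize derivative (derivative y) = y2
  generalize derivative y = y1
  generalize (1 - X : ℝ[X]) = w at *
  rw [hX]
  obtain ⟨m, rfl⟩ : ∃ m, a = m + 1 := ⟨a - 1, by omega⟩
  rcases m with _ | m
  · simp only [C_add, C_mul, C_sub, C_neg, map_natCast, map_ofNat, map_one, zero_add, Nat.cast_one,
      Nat.cast_zero, map_zero, Nat.reduceSub, pow_zero, pow_one]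
    ring
  · simp only [C_add, C_mul, C_sub, C_neg, map_natCast, map_ofNat, map_one, Nat.cast_add,
      Nat.cast_one, Nat.add_sub_cancel]
    ring

lemma jD_conj (a : ℕ) (ha : 1 ≤ a) (B : ℝ) (y : ℝ[X]) :
    jD (-(a : ℝ)) B (zP ^ a * y) = zP ^ a * (jD (a : ℝ) B y - C ((a : ℝ) * (B + 1)) * y) := by
  rw [zP, mul_pow, ← C_pow, mul_assoc, ← smul_eq_C_mul, map_smul, jD_conj_aux a ha,
    smul_eq_C_mul, mul_assoc]

noncomputable def KK (a b u : ℕ) : ℝ :=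
  poch (-(a : ℝ) + 1) (max u (a + b - 1 - u)) /
    ((max u.factorial (a + b - 1 - u).factorial : ℕ) : ℝ)

noncomputable def Sp (a b u : ℕ) : ℝ[X] :=
  zS (fun j => deriv (AA (-(a : ℝ)) (-(b : ℝ)) u j) 0) (u + 1)

noncomputable def Yp (a b u : ℕ) : ℝ[X] :=
  zS (fun j => AA (-(a : ℝ)) (-(b : ℝ)) u j 0) (u + 1)

noncomputable def c2 (a b n : ℕ) : ℝ :=
  (-1 : ℝ) ^ (-(b : ℤ) + (n : ℤ)) *
      (((n - a).factorial : ℝ) * ((n - b).factorial : ℝ) *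
        ((a + b - 1 - n).factorial : ℝ)) / (n.factorial : ℝ)

/-- polynomial version of `Phat` -/
noncomputable def PP (a b : ℕ) (M : ℕ → ℝ) (n : ℕ) : ℝ[X] :=
  if a + b ≤ 2 * n ∧ n < a then
    C (KK a b n) * Sp a b n - C (KK a b (a + b - 1 - n)) * Sp a b (a + b - 1 - n)
  else if a ≤ n ∧ n < a + b then
    C (c2 a b n) * (C (M (n - a) - 1)⁻¹ * JP (-(a : ℝ)) (-(b : ℝ)) (a + b - 1 - n) +
      zP ^ a * JP (a : ℝ) (-(b : ℝ)) (n - a))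
  else JP (-(a : ℝ)) (-(b : ℝ)) n

lemma c2_ne (a b n : ℕ) : c2 a b n ≠ 0 := by
  rw [c2]
  have h := fun n : ℕ => (show (n.factorial : ℝ) ≠ 0 by exact_mod_cast n.factorial_ne_zero)
  refine div_ne_zero (mul_ne_zero (zpow_ne_zero _ (by norm_num))
    (mul_ne_zero (mul_ne_zero (h _) (h _)) (h _))) (h _)

lemma negA (a i : ℕ) (h : i + 1 < a) : -(a : ℝ) + 1 + i ≠ 0 := by
  have : (i : ℝ) + 1 < a := by exact_mod_cast h
  linarith

lemma KK_ne (a b u : ℕ) (h : u < a) (h' : a + b - 1 - u < a) : KK a b u ≠ 0 := by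
  refine div_ne_zero (poch_ne _ _ fun i hi => negA a i ?_) ?_
  · rcases lt_max_iff.mp hi with h | h <;> omega
  · have := u.factorial_pos
    exact_mod_cast (lt_max_of_lt_left this).ne'

lemma KK_symm (a b u : ℕ) (h : u < a + b) : KK a b (a + b - 1 - u) = KK a b u := by
  rw [KK, KK, show a + b - 1 - (a + b - 1 - u) = u by omega, max_comm, max_comm (Nat.factorial _)]

lemma deriv_phiJ (a b u : ℕ) (hu : u < a) (hb : 1 ≤ b) (x : ℝ) :
    deriv (fun s => phiJ (-(a : ℤ)) (-(b : ℤ)) u s x) 0 = (C (KK a b u) * Sp a b u).eval x := by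
  have hp : ∀ s, phiJ (-(a : ℤ)) (-(b : ℤ)) u s x = KK a b u *
      ∑ j ∈ Finset.range (u + 1), AA (-(a : ℝ)) (-(b : ℝ)) u j s * ((1 - x) / 2) ^ j := by
    intro s
    have : (-(-(a : ℤ)) - -(b : ℤ) - (u : ℤ) - 1).toNat = a + b - 1 - u := by omega
    rw [phiJ, this, KK]
    push_cast
    rfl
  simp only [hp]
  have hd : ∀ j ∈ Finset.range (u + 1), HasDerivAt
      (fun s => AA (-(a : ℝ)) (-(b : ℝ)) u j s * ((1 - x) / 2) ^ j)
      (deriv (AA (-(a : ℝ)) (-(b : ℝ)) u j) 0 * ((1 - x) / 2) ^ j) 0 := by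
    intro j hj
    refine (AA_diff _ _ _ _ fun i hi => negA a i ?_).hasDerivAt.mul_const _
    have := Finset.mem_range.mp hj
    omega
  have := ((HasDerivAt.fun_sum hd).const_mul (KK a b u)).deriv
  rw [this, eval_mul, eval_C, Sp, zS, eval_finsetSum]
  simp [eval_zP]

lemma ceil_le_iff' (m : ℤ) (n : ℤ) : ⌈(m : ℚ) / 2⌉ ≤ n ↔ m ≤ 2 * n := by
  rw [Int.ceil_le, div_le_iff₀ (by norm_num)]
  constructor
  · intro h
    have : (m : ℚ) ≤ ((2 * n : ℤ) : ℚ) := by push_cast; linarith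
    exact_mod_cast this
  · intro h
    have : (m : ℚ) ≤ ((2 * n : ℤ) : ℚ) := by exact_mod_cast h
    push_cast at this; linarith

lemma Phat_eq (a b : ℕ) (hb : 1 ≤ b) (hab : b ≤ a) (M : ℕ → ℝ) (n : ℕ) (x : ℝ) :
    Phat (-(a : ℤ)) (-(b : ℤ)) M n x = (PP a b M n).eval x := by
  rw [Phat, PP]
  have e0 : (-(-(a : ℤ)) - -(b : ℤ) - (n : ℤ) - 1).toNat = a + b - 1 - n := by omega
  have e1 : (-(-(a : ℤ))).toNat = a := by omega
  have e2 : (-(a : ℤ) + (n : ℤ)).toNat = n - a := by omega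
  have e3 : ((n : ℤ) + -(a : ℤ)).toNat = n - a := by omega
  have e4 : ((n : ℤ) + -(b : ℤ)).toNat = n - b := by omega
  rw [e0, e1, e2, e3, e4]
  have i1 : (-(-(a : ℤ)) - -(b : ℤ) ≤ 2 * (n : ℤ) ∧ (n : ℤ) ≤ -(-(a : ℤ)) - 1) ↔
      (a + b ≤ 2 * n ∧ n < a) := by omega
  have i2 : (-(-(a : ℤ)) ≤ (n : ℤ) ∧ (n : ℤ) ≤ -(-(a : ℤ)) - -(b : ℤ) - 1) ↔
      (a ≤ n ∧ n < a + b) := by omega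
  simp only [ceil_le_iff', i1, i2]
  split_ifs with h1 h2
  · rw [deriv_phiJ a b n (by omega) hb, deriv_phiJ a b _ (by omega) hb, eval_sub]
  · simp only [eval_mul, eval_add, eval_C, eval_pow, eval_zP, eval_JP, c2]
    push_cast
    rw [neg_neg]
  · rw [eval_JP]; push_cast; rfl

lemma lamcast (a b n : ℕ) (hn : n < a + b) :
    ((a + b - 1 - n : ℕ) : ℝ) = a + b - 1 - n := by
  rw [Nat.cast_sub (by omega), Nat.cast_sub (by omega)]; push_cast; ring

lemma JP_deg (a b n : ℕ) (h : (2 * n < a + b ∧ n < a) ∨ a + b ≤ n) :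
    JP (-(a : ℝ)) (-(b : ℝ)) n ≠ 0 ∧ (JP (-(a : ℝ)) (-(b : ℝ)) n).natDegree = n := by
  have hne : JP (-(a : ℝ)) (-(b : ℝ)) n ≠ 0 := by
    rcases h with h | h
    · refine JP_ne_small _ _ _ fun i hi => ?_
      have : (n : ℝ) < a := by exact_mod_cast h.2
      have : (0 : ℝ) ≤ i := by positivity
      linarith
    · exact JP_ne_large a b n h
  refine ⟨hne, ?_⟩
  have hle := JP_natDegree_le (-(a : ℝ)) (-(b : ℝ)) n
  rcases eig_deg _ _ n _ hne (jD_JP _ _ _) with h1 | h1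
  · exact h1
  · have h2 : (((JP (-(a : ℝ)) (-(b : ℝ)) n).natDegree + n + 1 : ℕ) : ℝ) = ((a + b : ℕ) : ℝ) := by
      push_cast; linarith
    have h3 : (JP (-(a : ℝ)) (-(b : ℝ)) n).natDegree + n + 1 = a + b := by exact_mod_cast h2
    omega

lemma Yp_eig (a b u : ℕ) (hu : u < a) : jD (-(a : ℝ)) (-(b : ℝ)) (Yp a b u) =
    (-((u : ℝ) * (u + -(a : ℝ) + -(b : ℝ) + 1))) • Yp a b u := by
  rw [Yp, jD_zS]
  convert add_zero _
  refine Finset.sum_eq_zero fun j hj => ?_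
  have hj := Finset.mem_range.mp hj
  have h := AA_rec (-(a : ℝ)) (-(b : ℝ)) u j 0 (by rw [sub_zero]; exact negA a j (by omega))
  beta_reduce
  rw [show ((j : ℝ) + 1) * (j + 1 + -(a : ℝ)) * AA (-(a : ℝ)) (-(b : ℝ)) u (j + 1) 0 -
      ((j : ℝ) - u) * (j + u + -(a : ℝ) + -(b : ℝ) + 1) * AA (-(a : ℝ)) (-(b : ℝ)) u j 0 = 0 by
    linear_combination h]
  simp

lemma Sp_jD (a b u : ℕ) (hu : u < a) : jD (-(a : ℝ)) (-(b : ℝ)) (Sp a b u) =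
    (-((u : ℝ) * (u + -(a : ℝ) + -(b : ℝ) + 1))) • Sp a b u +
      zS (fun j => ((j : ℝ) + 1) * AA (-(a : ℝ)) (-(b : ℝ)) u (j + 1) 0 -
        ((j : ℝ) - u) * AA (-(a : ℝ)) (-(b : ℝ)) u j 0) u := by
  rw [Sp, jD_zS]
  congr 1
  refine Finset.sum_congr rfl fun j hj => ?_
  have hj := Finset.mem_range.mp hj
  beta_reduce
  rw [AD_rec _ _ _ _ fun i hi => negA a i (by omega)]

lemma AA_symm (a b u j : ℕ) (hu : u < a + b) :
    AA (-(a : ℝ)) (-(b : ℝ)) (a + b - 1 - u) j 0 = AA (-(a : ℝ)) (-(b : ℝ)) u j 0 := by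
  rw [AA, AA, lamcast a b u hu, mul_comm (poch (-((a : ℝ) + b - 1 - u)) j)]
  congr 3 <;> congr 1 <;> ring

lemma poch_zero (u j : ℕ) (h : u < j) : poch (-(u : ℝ)) j = 0 :=
  Finset.prod_eq_zero (Finset.mem_range.mpr h) (by simp)

lemma AA_zero (A B : ℝ) (u j : ℕ) (s : ℝ) (h : u < j) : AA A B u j s = 0 := by
  rw [AA, poch_zero u j h]; simp

lemma Sp_diff (a b n : ℕ) (h1 : a + b ≤ 2 * n) (h2 : n < a) :
    zS (fun j => ((j : ℝ) + 1) * AA (-(a : ℝ)) (-(b : ℝ)) n (j + 1) 0 -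
        ((j : ℝ) - n) * AA (-(a : ℝ)) (-(b : ℝ)) n j 0) n
    - zS (fun j => ((j : ℝ) + 1) * AA (-(a : ℝ)) (-(b : ℝ)) (a + b - 1 - n) (j + 1) 0 -
        ((j : ℝ) - (a + b - 1 - n : ℕ)) * AA (-(a : ℝ)) (-(b : ℝ)) (a + b - 1 - n) j 0)
          (a + b - 1 - n)
    = ((n : ℝ) - (a + b - 1 - n : ℕ)) • Yp a b (a + b - 1 - n) := by
  have hs := fun j => AA_symm a b n j (by omega)
  have hz := fun j => AA_zero (-(a : ℝ)) (-(b : ℝ)) (a + b - 1 - n) j 0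
  generalize hm : a + b - 1 - n = m at *
  have hmn : m < n := by omega
  simp only [← hs]
  rw [Yp, zS, zS, zS]
  have r1 : Finset.range m ⊆ Finset.range n := Finset.range_mono (by omega)
  have r2 : Finset.range (m + 1) ⊆ Finset.range n := Finset.range_mono (by omega)
  rw [Finset.sum_subset r1 (f := fun j : ℕ => C (((j : ℝ) + 1) * AA (-(a : ℝ)) (-(b : ℝ)) m (j + 1) 0 -
        ((j : ℝ) - m) * AA (-(a : ℝ)) (-(b : ℝ)) m j 0) * zP ^ j),
    Finset.sum_subset r2 (f := fun j : ℕ => C (AA (-(a : ℝ)) (-(b : ℝ)) m j 0) * zP ^ j),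
    ← Finset.sum_sub_distrib, Finset.smul_sum]
  · refine Finset.sum_congr rfl fun j _ => ?_
    rw [← sub_mul, ← C_sub, smul_eq_C_mul, ← mul_assoc, ← C_mul]
    congr 2
    ring
  · intro j _ hj
    have : m < j := by simpa using hj
    rw [hz j this]; simp
  · intro j _ hj
    have : m ≤ j := by simpa using hj
    rw [hz (j + 1) (by omega)]
    rcases this.lt_or_eq with h | rfl
    · rw [hz j h]; simp
    · simp

end ExcProof4


section ExcProof5
open Polynomial

lemma PP_c1_eq (a b : ℕ) (hb : 1 ≤ b) (hab : b ≤ a) (M : ℕ → ℝ) (n : ℕ)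
    (h1 : a + b ≤ 2 * n) (h2 : n < a) :
    jD (-(a : ℝ)) (-(b : ℝ)) (PP a b M n) =
      (-((n : ℝ) * (n + -(a : ℝ) + -(b : ℝ) + 1))) • PP a b M n +
      (KK a b n * ((n : ℝ) - (a + b - 1 - n : ℕ))) • Yp a b (a + b - 1 - n) := by
  rw [PP, if_pos ⟨h1, h2⟩, KK_symm a b n (by omega), ← mul_sub, ← smul_eq_C_mul, map_smul, map_sub,
    Sp_jD a b n h2, Sp_jD a b (a + b - 1 - n) (by omega), mul_smul, ← Sp_diff a b n h1 h2]
  have : (-(((a + b - 1 - n : ℕ) : ℝ) * ((a + b - 1 - n : ℕ) + -(a : ℝ) + -(b : ℝ) + 1))) =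
      (-((n : ℝ) * (n + -(a : ℝ) + -(b : ℝ) + 1))) := by
    rw [lamcast a b n (by omega)]; ring
  rw [this]
  module

lemma Yp_coeff_ne (a b m : ℕ) (hm : 2 * m < a + b) (hm2 : m < a) (h3 : m + 1 < a + b - m) :
    (Yp a b m).coeff m ≠ 0 := by
  rw [Yp, zS_coeff]
  refine mul_ne_zero ?_ (pow_ne_zero _ (by norm_num))
  rw [AA]
  refine div_ne_zero (mul_ne_zero ?_ ?_) (mul_ne_zero ?_ (by exact_mod_cast m.factorial_ne_zero))
  · refine poch_ne _ _ fun i hi => ?_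
    have : (i : ℝ) < m := by exact_mod_cast hi
    linarith
  · refine poch_ne _ _ fun i hi => ?_
    have : (m : ℝ) + i + 1 < a + b := by exact_mod_cast (by omega : m + i + 1 < a + b)
    linarith
  · refine poch_ne _ _ fun i hi => ?_
    rw [sub_zero]; exact negA a i (by omega)

lemma PP_c1_jD (a b : ℕ) (hb : 1 ≤ b) (hab : b ≤ a) (M : ℕ → ℝ) (n : ℕ)
    (h1 : a + b ≤ 2 * n) (h2 : n < a) :
    ∃ c : ℝ, jD (-(a : ℝ)) (-(b : ℝ)) (PP a b M n) =
      (-((n : ℝ) * (n + -(a : ℝ) + -(b : ℝ) + 1))) • PP a b M n +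
      c • PP a b M (a + b - 1 - n) := by
  have hm : PP a b M (a + b - 1 - n) = JP (-(a : ℝ)) (-(b : ℝ)) (a + b - 1 - n) := by
    rw [PP, if_neg (by omega), if_neg (by omega)]
  have hd := JP_deg a b (a + b - 1 - n) (by omega)
  obtain ⟨c, hc⟩ := eig_unique (-(a : ℝ)) (-(b : ℝ)) (a + b - 1 - n) (Yp a b (a + b - 1 - n))
    (JP (-(a : ℝ)) (-(b : ℝ)) (a + b - 1 - n)) (Yp_eig a b _ (by omega)) (jD_JP _ _ _)
    (zS_natDegree_le _ _) hd.2.le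
    (by
      have := leadingCoeff_ne_zero.mpr hd.1
      rwa [← coeff_natDegree, hd.2] at this)
    (by
      intro m hm
      have : (m : ℝ) + (a + b - 1 - n : ℕ) + 1 < a + b := by
        exact_mod_cast (by omega : m + (a + b - 1 - n) + 1 < a + b)
      linarith)
  rw [PP_c1_eq a b hb hab M n h1 h2, hc, hm]
  exact ⟨_, by rw [smul_smul]⟩

lemma PP_c1_deg (a b : ℕ) (hb : 1 ≤ b) (hab : b ≤ a) (M : ℕ → ℝ) (n : ℕ)
    (h1 : a + b ≤ 2 * n) (h2 : n < a) : (PP a b M n).natDegree = n := by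
  have hE := PP_c1_eq a b hb hab M n h1 h2
  have hY := Yp_coeff_ne a b (a + b - 1 - n) (by omega) (by omega) (by omega)
  have hYd : (Yp a b (a + b - 1 - n)).natDegree ≤ a + b - 1 - n := zS_natDegree_le _ _
  have hm := lamcast a b n (by omega)
  have hK := KK_ne a b n h2 (by omega)
  generalize hmm : a + b - 1 - n = m at *
  have hmn : m < n := by omega
  have hR : (KK a b n * ((n : ℝ) - m)) ≠ 0 := by
    refine mul_ne_zero hK ?_
    have : (m : ℝ) < n := by exact_mod_cast hmn
    linarith
  have hT := eig_top _ _ _ _ _ hE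
  generalize hP : PP a b M n = P at *
  rw [coeff_smul, smul_eq_mul] at hT
  rcases lt_trichotomy P.natDegree m with h | h | h
  · exfalso
    have h3 := congrArg (fun p => coeff p m) hE
    simp only [coeff_jD, coeff_add, coeff_smul, smul_eq_mul] at h3
    rw [coeff_eq_zero_of_natDegree_lt (show P.natDegree < m + 2 by omega),
      coeff_eq_zero_of_natDegree_lt (show P.natDegree < m + 1 by omega),
      coeff_eq_zero_of_natDegree_lt h] at h3
    have : KK a b n * ((n : ℝ) - m) * (Yp a b m).coeff m = 0 := by linarith
    exact mul_ne_zero hR hY this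
  · exfalso
    rw [h] at hT
    refine mul_ne_zero hR hY ?_
    rw [← hT, hm]; ring
  · rw [coeff_eq_zero_of_natDegree_lt (show (Yp a b m).natDegree < P.natDegree by omega),
      mul_zero] at hT
    have hP0 : P ≠ 0 := by rintro rfl; simp at h
    have h2' : P.coeff P.natDegree ≠ 0 := by
      rw [coeff_natDegree]; exact leadingCoeff_ne_zero.mpr hP0
    have h3 := (mul_eq_zero.mp hT).resolve_right h2'
    have h4 : ((P.natDegree : ℝ) - n) * ((P.natDegree : ℝ) - m) = 0 := by
      rw [hm]; linear_combination -h3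
    rcases mul_eq_zero.mp h4 with h5 | h5
    · exact_mod_cast sub_eq_zero.mp h5
    · exfalso
      have : P.natDegree = m := by exact_mod_cast sub_eq_zero.mp h5
      omega

lemma PP_eig (a b : ℕ) (hb : 1 ≤ b) (hab : b ≤ a) (M : ℕ → ℝ) (n : ℕ)
    (h : ¬ (a + b ≤ 2 * n ∧ n < a)) :
    jD (-(a : ℝ)) (-(b : ℝ)) (PP a b M n) =
      (-((n : ℝ) * (n + -(a : ℝ) + -(b : ℝ) + 1))) • PP a b M n := by
  rw [PP, if_neg h]
  split_ifs with h2
  · have e2 : jD (-(a : ℝ)) (-(b : ℝ)) (zP ^ a * JP (a : ℝ) (-(b : ℝ)) (n - a)) =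
        (-((n : ℝ) * (n + -(a : ℝ) + -(b : ℝ) + 1))) • (zP ^ a * JP (a : ℝ) (-(b : ℝ)) (n - a)) := by
      rw [jD_conj a (by omega), jD_JP, Nat.cast_sub h2.1, ← smul_eq_C_mul, ← sub_smul,
        mul_smul_comm]
      congr 1
      ring
    rw [← smul_eq_C_mul, ← smul_eq_C_mul, map_smul, map_add, map_smul, jD_JP, e2,
      lamcast a b n (by omega)]
    rw [show (-(((a : ℝ) + b - 1 - n) * (a + b - 1 - n + -(a : ℝ) + -(b : ℝ) + 1))) =
      (-((n : ℝ) * (n + -(a : ℝ) + -(b : ℝ) + 1))) by ring]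
    module
  · exact jD_JP _ _ _

lemma PP_c2_deg (a b : ℕ) (hb : 1 ≤ b) (hab : b ≤ a) (M : ℕ → ℝ) (n : ℕ)
    (h1 : a ≤ n) (h2 : n < a + b) : (PP a b M n).natDegree = n := by
  have hJ : JP (a : ℝ) (-(b : ℝ)) (n - a) ≠ 0 := by
    refine JP_ne_small _ _ _ fun i hi => ?_
    have : (i : ℝ) < (n - a : ℕ) := by exact_mod_cast hi
    have : (0 : ℝ) ≤ a := by positivity
    linarith
  have hz : zP.natDegree = 1 := by
    refine le_antisymm (by simpa using natDegree_zP_pow 1) ?_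
    refine le_natDegree_of_ne_zero ?_
    have := coeff_zP_pow 1
    rw [pow_one] at this
    rw [this]; norm_num
  have hz0 : zP ≠ 0 := by rintro h; rw [h] at hz; simp at hz
  have hK0 : zP ^ a * JP (a : ℝ) (-(b : ℝ)) (n - a) ≠ 0 := mul_ne_zero (pow_ne_zero _ hz0) hJ
  have e2 : jD (-(a : ℝ)) (-(b : ℝ)) (zP ^ a * JP (a : ℝ) (-(b : ℝ)) (n - a)) =
        (-((n : ℝ) * (n + -(a : ℝ) + -(b : ℝ) + 1))) • (zP ^ a * JP (a : ℝ) (-(b : ℝ)) (n - a)) := by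
    rw [jD_conj a (by omega), jD_JP, Nat.cast_sub h1, ← smul_eq_C_mul, ← sub_smul,
        mul_smul_comm]
    congr 1
    ring
  have hge : a ≤ (zP ^ a * JP (a : ℝ) (-(b : ℝ)) (n - a)).natDegree := by
    rw [natDegree_mul (pow_ne_zero _ hz0) hJ, natDegree_pow, hz]; omega
  have hdeg : (zP ^ a * JP (a : ℝ) (-(b : ℝ)) (n - a)).natDegree = n := by
    rcases eig_deg _ _ n _ hK0 e2 with h | h
    · exact h
    · exfalso
      generalize (zP ^ a * JP (a : ℝ) (-(b : ℝ)) (n - a)).natDegree = d at *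
      have : ((d + n + 1 : ℕ) : ℝ) = ((a + b : ℕ) : ℝ) := by push_cast; linarith
      have : d + n + 1 = a + b := by exact_mod_cast this
      omega
  rw [PP, if_neg (by omega), if_pos ⟨h1, h2⟩, natDegree_C_mul (c2_ne a b n), natDegree_add_eq_right_of_natDegree_lt, hdeg]
  rw [hdeg]
  refine (natDegree_C_mul_le _ _).trans_lt ((JP_natDegree_le _ _ _).trans_lt ?_)
  omega

lemma PP_deg (a b : ℕ) (hb : 1 ≤ b) (hab : b ≤ a) (M : ℕ → ℝ) (n : ℕ) :
    (PP a b M n).natDegree = n := by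
  by_cases h1 : a + b ≤ 2 * n ∧ n < a
  · exact PP_c1_deg a b hb hab M n h1.1 h1.2
  by_cases h2 : a ≤ n ∧ n < a + b
  · exact PP_c2_deg a b hb hab M n h2.1 h2.2
  rw [PP, if_neg h1, if_neg h2]
  exact (JP_deg a b n (by omega)).2

lemma PP_zero (a b : ℕ) (hb : 1 ≤ b) (hab : b ≤ a) (M : ℕ → ℝ) : PP a b M 0 ≠ 0 := by
  rw [PP, if_neg (by omega), if_neg (by omega)]
  exact (JP_deg a b 0 (by omega)).1

lemma PP_ne (a b : ℕ) (hb : 1 ≤ b) (hab : b ≤ a) (M : ℕ → ℝ) (n : ℕ) : PP a b M n ≠ 0 := by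
  rcases n.eq_zero_or_pos with rfl | h
  · exact PP_zero a b hb hab M
  · intro h0
    have := PP_deg a b hb hab M n
    rw [h0] at this
    simp at this; omega

lemma PP_expand (a b : ℕ) (hb : 1 ≤ b) (hab : b ≤ a) (M : ℕ → ℝ) (N : ℕ) (y : ℝ[X])
    (hy : y.natDegree < N) : ∃ d : ℕ → ℝ, y = ∑ n ∈ Finset.range N, d n • PP a b M n := by
  induction N generalizing y with
  | zero => omega
  | succ N ih =>
    set c := y.coeff N / (PP a b M N).coeff N with hc
    have hne : (PP a b M N).coeff N ≠ 0 := by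
      have := leadingCoeff_ne_zero.mpr (PP_ne a b hb hab M N)
      rwa [← coeff_natDegree, PP_deg a b hb hab] at this
    have hc0 : (y - c • PP a b M N).coeff N = 0 := by
      rw [coeff_sub, coeff_smul, smul_eq_mul, hc]; field_simp; ring
    have hle : (y - c • PP a b M N).natDegree ≤ N :=
      (natDegree_sub_le _ _).trans (max_le (by omega)
        ((natDegree_smul_le _ _).trans (PP_deg a b hb hab M N).le))
    have key : ∃ d : ℕ → ℝ, y - c • PP a b M N = ∑ n ∈ Finset.range N, d n • PP a b M n := by
      by_cases h0 : y - c • PP a b M N = 0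
      · exact ⟨0, by rw [h0]; simp⟩
      · refine ih _ (lt_of_le_of_ne hle ?_)
        intro h
        refine h0 (leadingCoeff_eq_zero.mp ?_)
        rw [← coeff_natDegree, h, hc0]
    obtain ⟨d, hd⟩ := key
    refine ⟨fun n => if n = N then c else d n, ?_⟩
    rw [Finset.sum_range_succ]
    beta_reduce
    rw [if_pos rfl, ← sub_eq_iff_eq_add, hd]
    refine Finset.sum_congr rfl fun n hn => ?_
    have := Finset.mem_range.mp hn
    rw [if_neg (by omega)]

end ExcProof5


section ExcProof6
open Polynomial

lemma dens_aux (μ : Measure ℝ) [IsFiniteMeasure μ] (hμ : ∀ᵐ x ∂μ, x ∈ Set.Icc (-1 : ℝ) 1)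
    (Ω : ℝ[X]) (hΩ : ∀ x ∈ Set.Icc (-1 : ℝ) 1, Ω.eval x ≠ 0) (g : ℝ → ℝ) (hg : MemLp g 2 μ)
    (ε : ℝ) (hε : 0 < ε) :
    ∃ h : ℝ[X], eLpNorm (fun x => g x - (Ω ^ 2 * h).eval x) 2 μ < ENNReal.ofReal ε := by
  obtain ⟨φ, hφ, hφm⟩ := hg.exists_boundedContinuous_eLpNorm_sub_le (by norm_num)
    (ε := ENNReal.ofReal (ε / 3)) (by simpa using hε)
  obtain ⟨B, hB⟩ := isCompact_Icc.exists_bound_of_continuousOn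
    (f := fun x => (Ω ^ 2).eval x) (s := Set.Icc (-1 : ℝ) 1) (by fun_prop)
  have hB0 : 0 ≤ B := (norm_nonneg _).trans (hB 0 (by norm_num))
  set V : ENNReal := μ Set.univ ^ ((2 : ENNReal).toReal)⁻¹ with hV
  have hVt : V ≠ ⊤ := by
    rw [hV]; exact ENNReal.rpow_ne_top_of_nonneg (by positivity) (measure_ne_top _ _)
  have hV0 : 0 ≤ V.toReal := ENNReal.toReal_nonneg
  set δ : ℝ := ε / (3 * (V.toReal + 1)) with hδ
  have hδ0 : 0 < δ := by positivity
  obtain ⟨h, hh⟩ := exists_polynomial_near_of_continuousOn (-1) 1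
    (fun x => φ x / (Ω ^ 2).eval x)
    (by
      refine ContinuousOn.div (by fun_prop) (by fun_prop) fun x hx => ?_
      rw [eval_pow]; exact pow_ne_zero _ (hΩ x hx)) (δ / (B + 1)) (by positivity)
  refine ⟨h, ?_⟩
  have hbd : ∀ᵐ x ∂μ, ‖φ x - (Ω ^ 2 * h).eval x‖ ≤ δ := by
    filter_upwards [hμ] with x hx
    have h1 := (hh x hx).le
    have h2 := hB x hx
    have h3 : (Ω ^ 2).eval x ≠ 0 := by rw [eval_pow]; exact pow_ne_zero _ (hΩ x hx)
    have h4 : φ x - (Ω ^ 2 * h).eval x =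
        -((Ω ^ 2).eval x * (h.eval x - φ x / (Ω ^ 2).eval x)) := by
      rw [eval_mul]; field_simp; ring
    rw [h4, norm_neg, norm_mul]
    calc _ ≤ B * (δ / (B + 1)) := by
          refine mul_le_mul h2 ?_ (norm_nonneg _) hB0
          simpa using h1
      _ ≤ δ := by
          rw [mul_div_assoc', div_le_iff₀ (by positivity)]
          nlinarith
  have h5 := eLpNorm_le_of_ae_bound (p := 2) hbd
  have h6 : μ Set.univ ^ ((2 : ENNReal).toReal)⁻¹ * ENNReal.ofReal δ ≤ ENNReal.ofReal (ε / 3) := by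
    rw [← hV, ← ENNReal.ofReal_toReal hVt, ← ENNReal.ofReal_mul hV0]
    refine ENNReal.ofReal_le_ofReal ?_
    rw [hδ, mul_div_assoc', div_le_div_iff₀ (by positivity) (by positivity)]
    nlinarith
  have h7 : eLpNorm (fun x => g x - (Ω ^ 2 * h).eval x) 2 μ ≤
      eLpNorm (g - ⇑φ) 2 μ + eLpNorm (fun x => φ x - (Ω ^ 2 * h).eval x) 2 μ := by
    have : (fun x => g x - (Ω ^ 2 * h).eval x) =
        (g - ⇑φ) + (fun x => φ x - (Ω ^ 2 * h).eval x) := by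
      ext x; simp
    rw [this]
    refine eLpNorm_add_le (hg.1.sub hφm.1) ?_ (by norm_num)
    exact (by fun_prop : Continuous fun x => φ x - (Ω ^ 2 * h).eval x).aestronglyMeasurable
  calc _ ≤ _ := h7
    _ ≤ ENNReal.ofReal (ε / 3) + ENNReal.ofReal (ε / 3) := add_le_add hφ (h5.trans h6)
    _ = ENNReal.ofReal (ε / 3 + ε / 3) := (ENNReal.ofReal_add (by positivity) (by positivity)).symm
    _ < ENNReal.ofReal ε := by
      rw [ENNReal.ofReal_lt_ofReal_iff hε]; linarith

lemma orth_aux (a b : ℝ) (A B : ℕ) {k : ℕ} (hk : 0 < k) (hA : (A : ℝ) = a + k)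
    (hB : (B : ℝ) = b + k) (f : Fin k → ℝ[X])
    (hf : ∀ i, jD a b (f i) ∈ Submodule.span ℝ (Set.range f))
    (hx : ∀ x ∈ Set.Icc (-1 : ℝ) 1, (wrO f).eval x ≠ 0) (y z : ℝ[X]) (l₁ l₂ : ℝ)
    (hy : jD a b y = l₁ • y) (hz : jD a b z = l₂ • z) (hl : l₁ ≠ l₂) :
    ∫ x in (-1 : ℝ)..1, (wrW f y).eval x * (wrW f z).eval x *
      ((1 - x) ^ A * (1 + x) ^ B / (wrO f).eval x ^ 2) = 0 := by
  set D : ℝ[X] := derivative (wrW f y) * wrW f z - wrW f y * derivative (wrW f z) with hD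
  have hder : ∀ x ∈ Set.uIcc (-1 : ℝ) 1, HasDerivAt
      (fun x => (1 - x) ^ (A + 1) * (1 + x) ^ (B + 1) * D.eval x / (wrO f).eval x ^ 2)
      ((l₁ - l₂) * ((wrW f y).eval x * (wrW f z).eval x *
        ((1 - x) ^ A * (1 + x) ^ B / (wrO f).eval x ^ 2))) x := by
    intro x hxx
    rw [Set.uIcc_of_le (by norm_num)] at hxx
    have h0 := hx x hxx
    have hbil := wr_bilinear a b x hk f hf h0 y z l₁ l₂ hy hz
    have e1 : HasDerivAt (fun x : ℝ => (1 - x) ^ (A + 1)) (-(((A : ℝ) + 1) * (1 - x) ^ A)) x := by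
      have := ((hasDerivAt_id x).const_sub (1 : ℝ)).fun_pow (A + 1)
      simpa using this
    have e2 : HasDerivAt (fun x : ℝ => (1 + x) ^ (B + 1)) (((B : ℝ) + 1) * (1 + x) ^ B) x := by
      have := ((hasDerivAt_id x).const_add (1 : ℝ)).fun_pow (B + 1)
      simpa using this
    have e3 := D.hasDerivAt x
    have e4 := ((wrO f).hasDerivAt x).fun_pow 2
    have e5 := ((e1.mul e2).mul e3).div e4 (pow_ne_zero 2 h0)
    refine e5.congr_deriv ?_
    have hD' : (derivative D).eval x =
        (derivative (derivative (wrW f y))).eval x * (wrW f z).eval x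
          - (wrW f y).eval x * (derivative (derivative (wrW f z))).eval x := by
      rw [hD]
      simp only [derivative_sub, derivative_mul, eval_sub, eval_add, eval_mul]
      ring
    have hDx : D.eval x = (derivative (wrW f y)).eval x * (wrW f z).eval x
          - (wrW f y).eval x * (derivative (wrW f z)).eval x := by
      rw [hD]; simp
    rw [← hD', ← hDx] at hbil
    simp only [Pi.mul_apply]
    generalize (derivative D).eval x = D' at *
    generalize D.eval x = D0 at *
    generalize (derivative (wrO f)).eval x = O' at *
    generalize (wrO f).eval x = O at *
    generalize (wrW f y).eval x = W1 at *
    generalize (wrW f z).eval x = W2 at *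
    rw [hA, hB]
    field_simp
    push_cast
    linear_combination (-(O * (1 - x) ^ A * (1 + x) ^ B)) * hbil
  have hint : ∫ x in (-1 : ℝ)..1, (l₁ - l₂) * ((wrW f y).eval x * (wrW f z).eval x *
        ((1 - x) ^ A * (1 + x) ^ B / (wrO f).eval x ^ 2)) = 0 := by
    rw [intervalIntegral.integral_eq_sub_of_hasDerivAt hder]
    · simp
    · refine ContinuousOn.intervalIntegrable ?_
      rw [Set.uIcc_of_le (by norm_num)]
      refine ContinuousOn.mul (by fun_prop) (ContinuousOn.mul (by fun_prop) ?_)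
      refine ContinuousOn.div (by fun_prop) (by fun_prop) fun x hxx => pow_ne_zero _ (hx x hxx)
  rw [intervalIntegral.integral_const_mul] at hint
  exact (mul_eq_zero.mp hint).resolve_left (sub_ne_zero.mpr hl)

lemma iteratedDeriv_eval (p : ℝ[X]) (j : ℕ) (x : ℝ) :
    iteratedDeriv j (fun x => p.eval x) x = (derivative^[j] p).eval x := by
  induction j generalizing p with
  | zero => simp
  | succ j ih =>
    rw [iteratedDeriv_succ', Function.iterate_succ_apply, ← ih]
    congr 1
    ext x
    simp

lemma OmegaJ_eq (a b : ℕ) (hb : 1 ≤ b) (hab : b ≤ a) (M : ℕ → ℝ) (F : Finset ℕ) (x : ℝ) :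
    OmegaJ (-(a : ℤ)) (-(b : ℤ)) M F x = (wrO fun i => PP a b M (elemOf F i)).eval x := by
  have hP : ∀ n, Phat (-(a : ℤ)) (-(b : ℤ)) M n = fun x => (PP a b M n).eval x :=
    fun n => funext fun x => Phat_eq a b hb hab M n x
  rw [OmegaJ, wrO, ← coe_evalRingHom, RingHom.map_det]
  congr 1
  ext i j
  simp [hP, iteratedDeriv_eval, -Function.iterate_succ]

lemma exJacobi_eq (a b : ℕ) (hb : 1 ≤ b) (hab : b ≤ a) (M : ℕ → ℝ) (F : Finset ℕ) (n : ℕ) (x : ℝ) :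
    exJacobi (-(a : ℤ)) (-(b : ℤ)) M F n x =
      (wrW (fun i => PP a b M (elemOf F i)) (PP a b M (n - uF F))).eval x := by
  have hP : ∀ n, Phat (-(a : ℤ)) (-(b : ℤ)) M n = fun x => (PP a b M n).eval x :=
    fun n => funext fun x => Phat_eq a b hb hab M n x
  rw [exJacobi, wrW_eq_det, ← coe_evalRingHom, RingHom.map_det]
  congr 1
  ext i j
  refine Fin.cases ?_ (fun l => ?_) i
  · simp [hP, iteratedDeriv_eval, -Function.iterate_succ]
  · simp [hP, iteratedDeriv_eval, -Function.iterate_succ]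

lemma exists_elemOf (F : Finset ℕ) (m : ℕ) (hm : m ∈ F) : ∃ i, elemOf F i = m :=
  ⟨(F.orderIsoOfFin rfl).symm ⟨m, hm⟩, by simp [elemOf]⟩

lemma elemOf_mem (F : Finset ℕ) (i : Fin F.card) : elemOf F i ∈ F :=
  (F.orderIsoOfFin rfl i).2

lemma exc_main (a b : ℕ) (hb : 1 ≤ b) (hab : b ≤ a) (M : ℕ → ℝ) (F : Finset ℕ)
    (hFc : ∀ k : ℕ, b ≤ k → k < a + b → k ∈ F)
    (hΩ : ∀ x ∈ Set.Icc (-1 : ℝ) 1, OmegaJ (-(a : ℤ)) (-(b : ℤ)) M F x ≠ 0) :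
    (∀ x ∈ Set.Ioo (-1 : ℝ) 1, 0 < wJ (-(a : ℤ)) (-(b : ℤ)) M F x) ∧
    MeasureTheory.IntegrableOn (wJ (-(a : ℤ)) (-(b : ℤ)) M F) (Set.Icc (-1 : ℝ) 1) ∧
    (∀ m n : ℕ, inSigma F m → inSigma F n → m ≠ n →
      ∫ x in (-1 : ℝ)..1, exJacobi (-(a : ℤ)) (-(b : ℤ)) M F m x *
        exJacobi (-(a : ℤ)) (-(b : ℤ)) M F n x * wJ (-(a : ℤ)) (-(b : ℤ)) M F x = 0) ∧
    (∀ g : ℝ → ℝ, MeasureTheory.MemLp g 2 (jacobiMeasure (-(a : ℤ)) (-(b : ℤ)) M F) →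
      ∀ ε : ℝ, 0 < ε →
        ∃ (S : Finset ℕ) (c : ℕ → ℝ), (∀ n ∈ S, inSigma F n) ∧
          MeasureTheory.eLpNorm
              (fun x => g x - ∑ n ∈ S, c n * exJacobi (-(a : ℤ)) (-(b : ℤ)) M F n x) 2
              (jacobiMeasure (-(a : ℤ)) (-(b : ℤ)) M F) < ENNReal.ofReal ε) := by
  have hcard : a ≤ F.card := by
    have : Finset.Ico b (a + b) ⊆ F := fun k hk => by
      have := Finset.mem_Ico.mp hk
      exact hFc k this.1 this.2
    have := Finset.card_le_card this
    rw [Nat.card_Ico] at this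
    omega
  set f : Fin F.card → ℝ[X] := fun i => PP a b M (elemOf F i) with hfdef
  have hΩ' : ∀ x ∈ Set.Icc (-1 : ℝ) 1, (wrO f).eval x ≠ 0 := by
    intro x hx; rw [← OmegaJ_eq a b hb hab]; exact hΩ x hx
  have hw : wJ (-(a : ℤ)) (-(b : ℤ)) M F = fun x : ℝ =>
      (1 - x) ^ (F.card - a) * (1 + x) ^ (F.card - b) / (wrO f).eval x ^ 2 := by
    ext x
    rw [wJ, OmegaJ_eq a b hb hab, show -(a : ℤ) + (F.card : ℤ) = ((F.card - a : ℕ) : ℤ) by omega,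
      show -(b : ℤ) + (F.card : ℤ) = ((F.card - b : ℕ) : ℤ) by omega, zpow_natCast, zpow_natCast]
  have hmemf : ∀ m ∈ F, PP a b M m ∈ Submodule.span ℝ (Set.range f) := by
    intro m hm
    obtain ⟨i, rfl⟩ := exists_elemOf F m hm
    exact Submodule.subset_span ⟨i, rfl⟩
  have hf : ∀ i, jD (-(a : ℝ)) (-(b : ℝ)) (f i) ∈ Submodule.span ℝ (Set.range f) := by
    intro i
    have h1 := hmemf _ (elemOf_mem F i)
    simp only [hfdef]
    by_cases hc : a + b ≤ 2 * elemOf F i ∧ elemOf F i < a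
    · obtain ⟨c, hc'⟩ := PP_c1_jD a b hb hab M _ hc.1 hc.2
      rw [hc']
      exact Submodule.add_mem _ (Submodule.smul_mem _ _ h1)
        (Submodule.smul_mem _ _ (hmemf _ (hFc _ (by omega) (by omega))))
    · rw [PP_eig a b hb hab M _ hc]
      exact Submodule.smul_mem _ _ h1
  have hcont : ContinuousOn (wJ (-(a : ℤ)) (-(b : ℤ)) M F) (Set.Icc (-1 : ℝ) 1) := by
    rw [hw]
    exact ContinuousOn.div (by fun_prop) (by fun_prop) fun x hx => pow_ne_zero _ (hΩ' x hx)
  have hint : IntegrableOn (wJ (-(a : ℤ)) (-(b : ℤ)) M F) (Set.Icc (-1 : ℝ) 1) :=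
    hcont.integrableOn_Icc
  refine ⟨?_, hint, ?_, ?_⟩
  · intro x hx
    rw [hw]
    have h1 : 0 < 1 - x := by linarith [hx.2]
    have h2 : 0 < 1 + x := by linarith [hx.1]
    have h3 := hΩ' x ⟨hx.1.le, hx.2.le⟩
    beta_reduce
    positivity
  · intro m n hm hn hmn
    rw [hw]
    simp only [exJacobi_eq a b hb hab]
    have hne : m - uF F ≠ n - uF F := by have := hm.1; have := hn.1; omega
    have hm2 := hm.2
    have hn2 := hn.2
    generalize m - uF F = p at *
    generalize n - uF F = q at *
    have hp : ¬ (b ≤ p ∧ p < a + b) := fun h => hm2 (hFc p h.1 h.2)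
    have hq : ¬ (b ≤ q ∧ q < a + b) := fun h => hn2 (hFc q h.1 h.2)
    refine orth_aux (-(a : ℝ)) (-(b : ℝ)) _ _ (by omega) ?_ ?_ f hf hΩ' _ _ _ _
      (PP_eig a b hb hab M p (by omega)) (PP_eig a b hb hab M q (by omega)) ?_
    · rw [Nat.cast_sub (by omega)]; ring
    · rw [Nat.cast_sub (by omega)]; ring
    · intro h
      have h4 : ((p : ℝ) - q) * ((p : ℝ) + q + 1 - (a + b)) = 0 := by linear_combination -h
      rcases mul_eq_zero.mp h4 with h5 | h5
      · exact hne (by exact_mod_cast sub_eq_zero.mp h5)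
      · have : ((p + q + 1 : ℕ) : ℝ) = ((a + b : ℕ) : ℝ) := by push_cast; linarith
        have : p + q + 1 = a + b := by exact_mod_cast this
        omega
  · intro g hg ε hε
    have hfin : IsFiniteMeasure (jacobiMeasure (-(a : ℤ)) (-(b : ℤ)) M F) :=
      isFiniteMeasure_withDensity_ofReal hint.2
    have hae : ∀ᵐ x ∂(jacobiMeasure (-(a : ℤ)) (-(b : ℤ)) M F), x ∈ Set.Icc (-1 : ℝ) 1 :=
      (withDensity_absolutelyContinuous _ _).ae_le (ae_restrict_mem measurableSet_Icc)
    obtain ⟨h, hh⟩ := dens_aux _ hae (wrO f) hΩ' g hg ε hε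
    obtain ⟨y, hy⟩ := wrW_surj (by omega) f h
    obtain ⟨d, hd⟩ := PP_expand a b hb hab M (y.natDegree + 1) y (by omega)
    refine ⟨((Finset.range (y.natDegree + 1)).filter (· ∉ F)).image (· + uF F),
      fun n => d (n - uF F), ?_, ?_⟩
    · intro n hn
      obtain ⟨p, hp, rfl⟩ := Finset.mem_image.mp hn
      refine ⟨Nat.le_add_left _ _, ?_⟩
      rw [Nat.add_sub_cancel]
      exact (Finset.mem_filter.mp hp).2
    · convert hh using 3 with x
      rw [Finset.sum_image (add_left_injective (uF F)).injOn, ← hy]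
      conv_rhs => rw [hd]
      rw [map_sum, eval_finsetSum, Finset.sum_filter]
      congr 1
      refine Finset.sum_congr rfl fun p _ => ?_
      beta_reduce
      rw [map_smul, eval_smul, smul_eq_mul, exJacobi_eq a b hb hab, Nat.add_sub_cancel]
      split_ifs with hpF
      · obtain ⟨i, rfl⟩ := exists_elemOf F p hpF
        rw [show PP a b M (elemOf F i) = f i from rfl, wrW_self]
        simp
      · rfl

end ExcProof6


/-- orthogonality and completeness of the exceptional Jacobi polynomials with
respect to the positive weight `ω_{α,β;M,F}` on `[-1,1]`. -/
theorem exceptional_jacobi_orthogonality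
    (α β : ℤ) (M : ℕ → ℝ) (F : Finset ℕ)
    (hαβ : α ≤ β) (hβ : β ≤ -1)
    (hM : ∀ i, M i ≠ 0 ∧ M i ≠ 1)
    (hFpos : ∀ f ∈ F, 0 < f)
    (hFc : ∀ k : ℕ, -β ≤ (k : ℤ) → (k : ℤ) ≤ -α - β - 1 → k ∈ F)
    (hΩ : ∀ x ∈ Set.Icc (-1 : ℝ) 1, OmegaJ α β M F x ≠ 0) :
    (∀ x ∈ Set.Ioo (-1 : ℝ) 1, 0 < wJ α β M F x) ∧
    MeasureTheory.IntegrableOn (wJ α β M F) (Set.Icc (-1 : ℝ) 1) ∧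
    (∀ m n : ℕ, inSigma F m → inSigma F n → m ≠ n →
      ∫ x in (-1 : ℝ)..1, exJacobi α β M F m x * exJacobi α β M F n x * wJ α β M F x = 0) ∧
    (∀ g : ℝ → ℝ, MeasureTheory.MemLp g 2 (jacobiMeasure α β M F) →
      ∀ ε : ℝ, 0 < ε →
        ∃ (S : Finset ℕ) (c : ℕ → ℝ), (∀ n ∈ S, inSigma F n) ∧
          MeasureTheory.eLpNorm
              (fun x => g x - ∑ n ∈ S, c n * exJacobi α β M F n x) 2
              (jacobiMeasure α β M F) < ENNReal.ofReal ε) := by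
  obtain ⟨a, rfl⟩ : ∃ a : ℕ, α = -(a : ℤ) := ⟨(-α).toNat, by omega⟩
  obtain ⟨b, rfl⟩ : ∃ b : ℕ, β = -(b : ℤ) := ⟨(-β).toNat, by omega⟩
  exact exc_main a b (by omega) (by omega) M F (fun k h1 h2 => hFc k (by omega) (by omega)) hΩ
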